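/- Let P be a terminal simplicial reflexive d-polytope with exactly 3d-1 vertices, where d is even. Then P is isomorphic (as a lattice polytope, i.e., via a linear automorphism of N_ℝ preserving the lattice N) to the convex hull of the points e_1, ±e_2, ..., ±e_d, ±(e_1 - e_2), ±(e_3 - e_4), ..., ±(e_{d-1} - e_d), where e_1, ..., e_d is a basis of the lattice N. -/

import Mathlib

/-!
The polytope is studied through its facets `F`, encoded by their supporting functionals `u_F`
(`Fac`), with `u_F = 1` on `F` and `u_F ≤ 1` on the polytope; `co P u v` is the coordinate of a
point along the vertex `v` of `F`. By reflexivity all heights `u_F x` of lattice points are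
integers, and by terminality two vertices on no common facet add up to `0` or to a vertex
(`add_mem`).

**Counting.** At most `d` vertices have height `0` over a facet, since each of them is the
neighboring vertex across some vertex of the facet. With `3d - 1` vertices this leaves very little
room below (`Fac.defect`): the excess depths of the vertices below height `-1` sum up to
`η_0 - d + 1 - u_F(ν)`, where `ν` is the sum of all vertices and `η_0 ≤ d`. If `η_0 = d` (`Full`),
every vertex `v` of `F` has exactly one partner `φ v ∈ F` such that `φ v - v` is a vertex, these
differences are all the vertices of height `0`, and the vertices of `F` form a lattice basis.
Taking for `F` a facet whose cone contains `ν`, one sees that `ν` is either `0` or a vertex.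

**The case `ν = 0`** (`ZeroSum.false`). If all heights are at least `-1`, then `-x` is a vertex for
each vertex `x`, so that `3d - 1` is even, which is false for even `d`. Otherwise some facet has a
vertex at height `-2`, necessarily of the form `-a - b` with `a, b ∈ F` (`Spec`). Passing to the
facet in which `a` and `c = φ a` are replaced by `-a` and `c - a` (`Spec.turn`), one finds again a
vertex at height `-2`, of the form `-(c - a) - k` with `k ∈ F` (`Spec.next`): the `a`-coordinates
of all vertices sum up to `0`, and this forces one more vertex with a positive `a`-coordinate. A
second such turn produces a vertex `c - k'` with `k' ∈ F`, although `k'` has a partner different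
from `c` (`Spec.false`).

**The case `ν = a` is a vertex.** Every facet through `a` is full, with all heights at least `-1`,
and the vertices at height `-1` are negatives of vertices of the facet (`OneSum.eq_neg`). Moving to
neighboring facets through `a` shows that `φ (φ v) = v` unless `φ v = a`. At most one `k ≠ φ a` can
satisfy `φ k = a`, and since `φ` is a fixed-point-free involution on the other vertices of `F`,
whose total number `d` is even, there is none. So `φ` is an involution on `F`; all vertices but `a`
come in antipodal pairs (`OneSum.description`), and listing `F` as `a, φ a, a', φ a', …` gives the
required coordinates (`OneSum.exists_iso`).
-/

open Finset

/-- A point of `ℝ^d` is a lattice point if all of its coordinates are integers. -/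
def IsLatticePt {d : ℕ} (x : Fin d → ℝ) : Prop := ∀ i, ∃ z : ℤ, x i = (z : ℝ)

/-- The pairing between `M_ℝ` and `N_ℝ`, both identified with `ℝ^d`. -/
noncomputable def pairing {d : ℕ} (u x : Fin d → ℝ) : ℝ := ∑ i, u i * x i

/-- The `i`-th standard basis vector of `ℝ^d`. -/
noncomputable def stdVec {d : ℕ} (i : Fin d) : Fin d → ℝ := Pi.single i 1

/-- A polytope in `ℝ^d`, given by its finite vertex set (each listed point is
required to be an extreme point of the convex hull, i.e. a genuine vertex). -/
structure Polytope (d : ℕ) where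
  verts : Finset (Fin d → ℝ)
  vertsExtreme : ∀ v ∈ verts,
    v ∈ Set.extremePoints ℝ (convexHull ℝ (verts : Set (Fin d → ℝ)))

namespace Polytope

variable {d : ℕ}

/-- The polytope as a subset of `ℝ^d`. -/
def carrier (P : Polytope d) : Set (Fin d → ℝ) :=
  convexHull ℝ (P.verts : Set (Fin d → ℝ))

/-- A proper face of `P`, cut out by a supporting hyperplane. -/
def IsFace (P : Polytope d) (F : Set (Fin d → ℝ)) : Prop :=
  ∃ u : Fin d → ℝ, u ≠ 0 ∧ ∃ c : ℝ,
    (∀ x ∈ P.carrier, pairing u x ≤ c) ∧ F = {x ∈ P.carrier | pairing u x = c}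

/-- A facet of `P`: a nonempty proper face of dimension `d - 1`. -/
def IsFacet (P : Polytope d) (F : Set (Fin d → ℝ)) : Prop :=
  P.IsFace F ∧ F.Nonempty ∧ Module.finrank ℝ (vectorSpan ℝ F) = d - 1

/-- The set of vertices of `P` lying on `F`. -/
def vertsOn (P : Polytope d) (F : Set (Fin d → ℝ)) : Set (Fin d → ℝ) :=
  {v | v ∈ P.verts ∧ v ∈ F}

/-- `P` is simplicial if every facet has exactly `d` vertices. -/
def IsSimplicial (P : Polytope d) : Prop :=
  ∀ F, P.IsFacet F → (P.vertsOn F).ncard = d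

/-- `P` is a lattice polytope. -/
def IsLattice (P : Polytope d) : Prop := ∀ v ∈ P.verts, IsLatticePt v

/-- `u` is the supporting functional `u_F` of the facet `F`, i.e. `⟨u, ·⟩ = 1` on `F`. -/
def IsUF (P : Polytope d) (F : Set (Fin d → ℝ)) (u : Fin d → ℝ) : Prop :=
  ∀ x ∈ F, pairing u x = 1

/-- `u` is the dual basis element `u_F^v`: it takes value `1` at the vertex `v` of `F`
and `0` at all other vertices of `F`. -/
def IsDualBasisElt (P : Polytope d) (F : Set (Fin d → ℝ)) (v : Fin d → ℝ)
    (u : Fin d → ℝ) : Prop :=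
  pairing u v = 1 ∧ ∀ w ∈ P.vertsOn F, w ≠ v → pairing u w = 0

/-- `P` is reflexive: it is a lattice polytope with `0` in its interior, and every
facet lies on a hyperplane `⟨u, ·⟩ = 1` with `u` integral (equivalently, the dual
polytope is a lattice polytope). -/
def IsReflexive (P : Polytope d) : Prop :=
  P.IsLattice ∧ 0 ∈ interior P.carrier ∧
    ∀ F, P.IsFacet F → ∃ u : Fin d → ℤ, P.IsUF F (fun i => (u i : ℝ))

/-- `P` is terminal: the only lattice points of `P` are its vertices and the origin. -/
def IsTerminal (P : Polytope d) : Prop :=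
  ∀ x ∈ P.carrier, IsLatticePt x → x = 0 ∨ x ∈ P.verts

/-- `F'` is the neighboring facet `N(F, v)`: the facet different from `F` containing
all vertices of `F` except `v`. -/
def IsNeighborFacet (P : Polytope d) (F : Set (Fin d → ℝ)) (v : Fin d → ℝ)
    (F' : Set (Fin d → ℝ)) : Prop :=
  P.IsFacet F' ∧ F' ≠ F ∧ ∀ w ∈ P.vertsOn F, w ≠ v → w ∈ F'

/-- `y` is the neighboring vertex `n(F, v)`: the unique vertex of `N(F, v)` not on `F`. -/
def IsNeighborVertex (P : Polytope d) (F : Set (Fin d → ℝ)) (v : Fin d → ℝ)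
    (y : Fin d → ℝ) : Prop :=
  ∃ F', P.IsNeighborFacet F v F' ∧ y ∈ P.vertsOn F' ∧ y ∉ F

/-- `F` is a special facet of `P`: the sum of all vertices of `P` is a nonnegative
linear combination of the vertices of `F`, i.e. `⟨u_F^w, ν_P⟩ ≥ 0` for every vertex
`w` of `F`. -/
def IsSpecialFacet (P : Polytope d) (F : Set (Fin d → ℝ)) : Prop :=
  P.IsFacet F ∧ ∀ w ∈ P.vertsOn F, ∀ uFw : Fin d → ℝ,
    P.IsDualBasisElt F w uFw → 0 ≤ pairing uFw (∑ v ∈ P.verts, v)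

end Polytope

/-- `S` is a `ℤ`-basis of the lattice `ℤ^d ⊆ ℝ^d`. -/
def IsLatticeBasis {d : ℕ} (S : Set (Fin d → ℝ)) : Prop :=
  ∃ v : Fin d → (Fin d → ℝ), Set.range v = S ∧
    ∀ x : Fin d → ℝ, (IsLatticePt x ↔ ∃ a : Fin d → ℤ, x = ∑ i, (a i : ℝ) • v i)

/-- The vertex set of polytope (1): `e_1, ±e_2, …, ±e_d,
±(e_1-e_2), ±(e_3-e_4), …, ±(e_{d-1}-e_d)` (written with 0-based indices). -/
def evenTargetVerts (d : ℕ) : Set (Fin d → ℝ) :=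
  {x | (∃ i : Fin d, (i : ℕ) = 0 ∧ x = stdVec i) ∨
       (∃ i : Fin d, 1 ≤ (i : ℕ) ∧ (x = stdVec i ∨ x = -stdVec i)) ∨
       (∃ i j : Fin d, (i : ℕ) % 2 = 0 ∧ (j : ℕ) = (i : ℕ) + 1 ∧
         (x = stdVec i - stdVec j ∨ x = stdVec j - stdVec i))}

namespace TSR

/-! ### Integers among the reals, lattice points -/

/-- The real number `r` is an integer. -/
def IsI (r : ℝ) : Prop := ∃ z : ℤ, r = (z : ℝ)

theorem IsI.add {a b : ℝ} (ha : IsI a) (hb : IsI b) : IsI (a + b) := by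
  obtain ⟨z, rfl⟩ := ha
  obtain ⟨w, rfl⟩ := hb
  exact ⟨z + w, by push_cast; ring⟩

theorem IsI.sub {a b : ℝ} (ha : IsI a) (hb : IsI b) : IsI (a - b) := by
  obtain ⟨z, rfl⟩ := ha
  obtain ⟨w, rfl⟩ := hb
  exact ⟨z - w, by push_cast; ring⟩

theorem IsI.mul {a b : ℝ} (ha : IsI a) (hb : IsI b) : IsI (a * b) := by
  obtain ⟨z, rfl⟩ := ha
  obtain ⟨w, rfl⟩ := hb
  exact ⟨z * w, by push_cast; ring⟩

theorem isI_int (z : ℤ) : IsI (z : ℝ) := ⟨z, rfl⟩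

theorem isI_zero : IsI 0 := ⟨0, by simp⟩

theorem isI_one : IsI 1 := ⟨1, by simp⟩

theorem IsI.neg {a : ℝ} (ha : IsI a) : IsI (-a) := by
  simpa using isI_zero.sub ha

theorem IsI.sum {ι : Type*} {s : Finset ι} {f : ι → ℝ} (h : ∀ i ∈ s, IsI (f i)) :
    IsI (∑ i ∈ s, f i) := by
  classical
  induction s using Finset.induction_on with
  | empty => simpa using isI_zero
  | insert a s ha ih =>
    rw [Finset.sum_insert ha]
    exact (h a (Finset.mem_insert_self a s)).add
      (ih fun i hi => h i (Finset.mem_insert_of_mem hi))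

theorem IsI.lt {a b : ℝ} (ha : IsI a) (hb : IsI b) (h : a < b) : a + 1 ≤ b := by
  obtain ⟨z, rfl⟩ := ha
  obtain ⟨w, rfl⟩ := hb
  have : z < w := by exact_mod_cast h
  have : z + 1 ≤ w := this
  exact_mod_cast this

variable {d : ℕ}

theorem lat_add {x y : Fin d → ℝ} (hx : IsLatticePt x) (hy : IsLatticePt y) :
    IsLatticePt (x + y) := fun i => IsI.add (hx i) (hy i)

theorem lat_sub {x y : Fin d → ℝ} (hx : IsLatticePt x) (hy : IsLatticePt y) :
    IsLatticePt (x - y) := fun i => IsI.sub (hx i) (hy i)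

theorem lat_neg {x : Fin d → ℝ} (hx : IsLatticePt x) : IsLatticePt (-x) :=
  fun i => IsI.neg (hx i)

theorem lat_sum {ι : Type*} {s : Finset ι} {f : ι → Fin d → ℝ}
    (h : ∀ i ∈ s, IsLatticePt (f i)) : IsLatticePt (∑ i ∈ s, f i) := by
  intro j
  rw [Finset.sum_apply]
  exact IsI.sum fun i hi => h i hi j

/-! ### Facets as linear functionals -/

/-- The standing hypotheses on the polytope. -/
structure Good (P : Polytope d) : Prop where
  refl : P.IsReflexive
  simp : P.IsSimplicial
  term : P.IsTerminal
  pos : 0 < d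

/-- `u` is the functional `u_F` of a facet `F`: it is at most `1` on `P`, and the vertices on
which it takes the value `1` span the space. -/
def Fac (P : Polytope d) (u : (Fin d → ℝ) →ₗ[ℝ] ℝ) : Prop :=
  (∀ v ∈ P.verts, u v ≤ 1) ∧ Submodule.span ℝ {v | v ∈ P.verts ∧ u v = 1} = ⊤

open Classical in
/-- The vertices of the facet on which `u` takes the value `1`. -/
noncomputable def T (P : Polytope d) (u : (Fin d → ℝ) →ₗ[ℝ] ℝ) : Finset (Fin d → ℝ) :=
  P.verts.filter fun v => u v = 1

variable {P : Polytope d} {u : (Fin d → ℝ) →ₗ[ℝ] ℝ}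

theorem mem_T {v : Fin d → ℝ} : v ∈ T P u ↔ v ∈ P.verts ∧ u v = 1 := by
  classical
  simp [T]

theorem coe_T : ((T P u : Finset _) : Set (Fin d → ℝ)) = {v | v ∈ P.verts ∧ u v = 1} := by
  ext v
  simp [mem_T]

theorem Fac.ext (hu : Fac P u) {M : Type*} [AddCommGroup M] [Module ℝ M]
    {f g : (Fin d → ℝ) →ₗ[ℝ] M} (h : ∀ v ∈ T P u, f v = g v) : f = g :=
  LinearMap.ext_on hu.2 fun v hv => h v (mem_T.2 hv)

theorem carrier_le {f : (Fin d → ℝ) →ₗ[ℝ] ℝ} {c : ℝ} (h : ∀ v ∈ P.verts, f v ≤ c)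
    {x : Fin d → ℝ} (hx : x ∈ P.carrier) : f x ≤ c := by
  have hc : Convex ℝ {x : Fin d → ℝ | f x ≤ c} := convex_halfSpace_le f.isLinear c
  exact convexHull_min (fun v hv => h v hv) hc hx

theorem vert_mem {v : Fin d → ℝ} (h : v ∈ P.verts) : v ∈ P.carrier :=
  subset_convexHull ℝ _ h

theorem lin_eq_pairing (u : (Fin d → ℝ) →ₗ[ℝ] ℝ) (x : Fin d → ℝ) :
    pairing (fun i => u (Pi.single i 1)) x = u x := by
  unfold pairing
  conv_rhs => rw [LinearMap.pi_apply_eq_sum_univ u x]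
  refine Finset.sum_congr rfl fun i _ => ?_
  rw [smul_eq_mul, mul_comm]
  congr 1
  change u _ = u _
  congr 1
  funext j
  simp [Pi.single_apply, eq_comm]

theorem Fac.isFacet (hP : Good P) (hu : Fac P u) :
    P.IsFacet {x | x ∈ P.carrier ∧ u x = 1} := by
  have hd : Module.finrank ℝ (Fin d → ℝ) = d := by simp
  have hne : ∃ v, v ∈ P.verts ∧ u v = 1 := by
    by_contra! h
    have he : {v | v ∈ P.verts ∧ u v = 1} = (∅ : Set (Fin d → ℝ)) := by
      ext v
      simpa using h v
    have h2 := hu.2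
    rw [he, Submodule.span_empty] at h2
    have h3 : Module.finrank ℝ (⊤ : Submodule ℝ (Fin d → ℝ)) = 0 := by
      rw [← h2]
      simp
    have := hP.pos
    rw [finrank_top] at h3
    omega
  obtain ⟨v, hv, huv⟩ := hne
  have hu0 : u ≠ 0 := by
    rintro rfl
    simp at huv
  set F : Set (Fin d → ℝ) := {x | x ∈ P.carrier ∧ u x = 1} with hF
  have hvF : v ∈ F := ⟨vert_mem hv, huv⟩
  refine ⟨⟨fun i => u (Pi.single i 1), ?_, 1, ?_, ?_⟩, ⟨v, hvF⟩, ?_⟩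
  · intro h
    apply hu0
    ext x
    have := congrFun h x
    simpa using this
  · intro x hx
    rw [lin_eq_pairing]
    exact carrier_le hu.1 hx
  · ext x
    simp [lin_eq_pairing, hF]
  · have h1 : vectorSpan ℝ F ≤ LinearMap.ker u := by
      unfold vectorSpan
      rw [Submodule.span_le]
      rintro _ ⟨x, hx, y, hy, rfl⟩
      simp [hx.2, hy.2]
    have h2 : (⊤ : Submodule ℝ (Fin d → ℝ)) ≤ vectorSpan ℝ F ⊔ Submodule.span ℝ {v} := by
      rw [← hu.2, Submodule.span_le]
      intro w hw
      have : w = (w - v) + v := by simp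
      rw [this]
      refine Submodule.add_mem_sup ?_ (Submodule.mem_span_singleton_self v)
      exact vsub_mem_vectorSpan ℝ ⟨vert_mem hw.1, hw.2⟩ hvF
    have h3 : Module.finrank ℝ (LinearMap.ker u) + 1 = d := by
      have := Module.Dual.finrank_ker_add_one_of_ne_zero (f := u) hu0
      rwa [hd] at this
    have h4 := Submodule.finrank_mono h1
    have h5 := Submodule.finrank_mono h2
    rw [finrank_top, hd] at h5
    have h6 := Submodule.finrank_add_le_finrank_add_finrank (vectorSpan ℝ F)
      (Submodule.span ℝ {v})
    have h7 : Module.finrank ℝ (Submodule.span ℝ {v}) ≤ 1 := by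
      simpa using finrank_span_le_card (R := ℝ) ({v} : Set (Fin d → ℝ))
    omega

theorem Fac.card_T (hP : Good P) (hu : Fac P u) : (T P u).card = d := by
  have h := hP.simp _ (hu.isFacet hP)
  refine Eq.trans ?_ h
  rw [← Set.ncard_coe_finset]
  congr 1
  ext v
  simp only [coe_T, Polytope.vertsOn, Set.mem_ofPred_eq]
  exact ⟨fun h => ⟨h.1, vert_mem h.1, h.2⟩, fun h => ⟨h.1, h.2.2⟩⟩

theorem Fac.linInd (hP : Good P) (hu : Fac P u) :
    LinearIndependent ℝ (fun v : T P u => (v : Fin d → ℝ)) := by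
  refine linearIndependent_of_top_le_span_of_card_eq_finrank ?_ ?_
  · rw [← hu.2, ← coe_T]
    simp
  · simp [hu.card_T hP]

theorem Fac.isI (hP : Good P) (hu : Fac P u) {x : Fin d → ℝ} (hx : IsLatticePt x) :
    IsI (u x) := by
  obtain ⟨w, hw⟩ := hP.refl.2.2 _ (hu.isFacet hP)
  have hwu : u = ∑ i, (w i : ℝ) • LinearMap.proj i := by
    refine hu.ext fun v hv => ?_
    have h1 := hw v ⟨vert_mem (mem_T.1 hv).1, (mem_T.1 hv).2⟩
    rw [(mem_T.1 hv).2, ← h1]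
    simp [pairing]
  rw [hwu]
  simp only [LinearMap.sum_apply, LinearMap.smul_apply, LinearMap.proj_apply, smul_eq_mul]
  exact IsI.sum fun i _ => (isI_int _).mul (hx i)

/-- The functional `u_F^v` dual to the vertex `v` of the facet of `u`; the junk value `0` is
used when there is no such functional. -/
noncomputable def co (P : Polytope d) (u : (Fin d → ℝ) →ₗ[ℝ] ℝ) (v : Fin d → ℝ) :
    (Fin d → ℝ) →ₗ[ℝ] ℝ :=
  open Classical in
  if h : ∃ f : (Fin d → ℝ) →ₗ[ℝ] ℝ, f v = 1 ∧ ∀ w ∈ T P u, w ≠ v → f w = 0 then h.choose else 0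

theorem Fac.co_spec (hP : Good P) (hu : Fac P u) {v : Fin d → ℝ} (hv : v ∈ T P u) :
    co P u v v = 1 ∧ ∀ w ∈ T P u, w ≠ v → co P u v w = 0 := by
  have h : ∃ f : (Fin d → ℝ) →ₗ[ℝ] ℝ, f v = 1 ∧ ∀ w ∈ T P u, w ≠ v → f w = 0 := by
    have hsp : ⊤ ≤ Submodule.span ℝ (Set.range fun v : T P u => (v : Fin d → ℝ)) := by
      rw [← hu.2, ← coe_T]
      simp
    let b := Module.Basis.mk (hu.linInd hP) hsp
    have hb : ∀ w : T P u, b w = w := fun w => by simp [b]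
    refine ⟨b.coord ⟨v, hv⟩, ?_, fun w hw hne => ?_⟩
    · have := hb ⟨v, hv⟩
      calc b.coord ⟨v, hv⟩ v = b.coord ⟨v, hv⟩ (b ⟨v, hv⟩) := by rw [this]
        _ = 1 := by simp
    · have := hb ⟨w, hw⟩
      calc b.coord ⟨v, hv⟩ w = b.coord ⟨v, hv⟩ (b ⟨w, hw⟩) := by rw [this]
        _ = 0 := by simp [hne]
  unfold co
  rw [dif_pos h]
  exact h.choose_spec

theorem Fac.co_self (hP : Good P) (hu : Fac P u) {v : Fin d → ℝ} (hv : v ∈ T P u) :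
    co P u v v = 1 := (hu.co_spec hP hv).1

theorem Fac.co_ne (hP : Good P) (hu : Fac P u) {v w : Fin d → ℝ} (hv : v ∈ T P u)
    (hw : w ∈ T P u) (h : w ≠ v) : co P u v w = 0 := (hu.co_spec hP hv).2 w hw h

theorem Fac.co_nonneg (hP : Good P) (hu : Fac P u) {v w : Fin d → ℝ} (hv : v ∈ T P u)
    (hw : w ∈ T P u) : 0 ≤ co P u v w := by
  by_cases h : w = v
  · rw [h, hu.co_self hP hv]
    exact zero_le_one
  · rw [hu.co_ne hP hv hw h]

theorem Fac.co_le_one (hP : Good P) (hu : Fac P u) {v w : Fin d → ℝ} (hv : v ∈ T P u)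
    (hw : w ∈ T P u) : co P u v w ≤ 1 := by
  by_cases h : w = v
  · rw [h, hu.co_self hP hv]
  · rw [hu.co_ne hP hv hw h]
    exact zero_le_one

theorem Fac.expand (hP : Good P) (hu : Fac P u) (x : Fin d → ℝ) :
    x = ∑ v ∈ T P u, co P u v x • v := by
  have h : (LinearMap.id : (Fin d → ℝ) →ₗ[ℝ] (Fin d → ℝ)) =
      ∑ v ∈ T P u, (co P u v).smulRight v := by
    refine hu.ext fun w hw => ?_
    simp only [LinearMap.id_apply, LinearMap.sum_apply, LinearMap.smulRight_apply]
    rw [Finset.sum_eq_single_of_mem w hw]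
    · rw [hu.co_self hP hw, one_smul]
    · intro v hv hne
      rw [hu.co_ne hP hv hw hne.symm, zero_smul]
  have h2 := congrArg (fun f => f x) h
  simpa using h2

theorem Fac.apply_eq_sum (hP : Good P) (hu : Fac P u) (f : (Fin d → ℝ) →ₗ[ℝ] ℝ)
    (x : Fin d → ℝ) : f x = ∑ v ∈ T P u, co P u v x * f v := by
  conv_lhs => rw [hu.expand hP x]
  simp

theorem Fac.eq_sum_co (hP : Good P) (hu : Fac P u) (x : Fin d → ℝ) :
    u x = ∑ v ∈ T P u, co P u v x := by
  rw [hu.apply_eq_sum hP u x]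
  refine Finset.sum_congr rfl fun v hv => ?_
  rw [(mem_T.1 hv).2, mul_one]

/-- A point with nonpositive coordinates and height at least `0` is the origin. -/
theorem Fac.eq_zero_of_nonpos (hP : Good P) (hu : Fac P u) {x : Fin d → ℝ}
    (h : ∀ v ∈ T P u, co P u v x ≤ 0) (h0 : 0 ≤ u x) : x = 0 := by
  have hs := hu.eq_sum_co hP x
  have hz : ∑ v ∈ T P u, co P u v x = 0 := le_antisymm (Finset.sum_nonpos h) (hs ▸ h0)
  rw [Finset.sum_eq_zero_iff_of_nonpos h] at hz
  rw [hu.expand hP x]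
  exact Finset.sum_eq_zero fun v hv => by rw [hz v hv, zero_smul]

/-! ### Existence of facets and of neighboring facets -/

theorem zero_mem (hP : Good P) : (0 : Fin d → ℝ) ∈ P.carrier := interior_subset hP.refl.2.1

/-- The origin is an interior point, so every direction is met by `P`. -/
theorem exists_small (hP : Good P) (x : Fin d → ℝ) : ∃ ε : ℝ, 0 < ε ∧ ε • x ∈ P.carrier := by
  have h0 : P.carrier ∈ nhds (0 : Fin d → ℝ) := mem_interior_iff_mem_nhds.1 hP.refl.2.1
  have hc : Filter.Tendsto (fun ε : ℝ => ε • x) (nhdsWithin 0 (Set.Ioi 0)) (nhds 0) := by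
    have : Filter.Tendsto (fun ε : ℝ => ε • x) (nhds 0) (nhds ((0 : ℝ) • x)) :=
      (continuous_id.smul continuous_const).tendsto 0
    rw [zero_smul] at this
    exact this.mono_left nhdsWithin_le_nhds
  obtain ⟨ε, h1, h2⟩ := ((hc.eventually h0).and self_mem_nhdsWithin).exists
  exact ⟨ε, h2, h1⟩

theorem eq_zero_of_nonneg (hP : Good P) {f : (Fin d → ℝ) →ₗ[ℝ] ℝ}
    (h : ∀ v ∈ P.verts, 0 ≤ f v) : f = 0 := by
  ext1 x
  have key : ∀ x, 0 ≤ f x := by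
    intro x
    obtain ⟨ε, hε, hx⟩ := exists_small hP x
    have h1 := carrier_le (f := -f) (c := 0) (fun v hv => by simpa using h v hv) hx
    simp only [LinearMap.neg_apply, map_smul, smul_eq_mul] at h1
    nlinarith
  ext
  have h1 := key (Pi.single x 1)
  have h2 := key (-Pi.single x 1)
  rw [map_neg] at h2
  simp only [LinearMap.coe_comp, LinearMap.coe_single, Function.comp_apply, LinearMap.zero_apply]
  linarith

theorem exists_eps {α : Type*} (s : Finset α) (g h : α → ℝ) (hg : ∀ a ∈ s, 0 < g a) :
    ∃ ε : ℝ, 0 < ε ∧ ∀ a ∈ s, ε * h a ≤ g a := by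
  classical
  induction s using Finset.induction_on with
  | empty => exact ⟨1, one_pos, by simp⟩
  | insert a s ha ih =>
    obtain ⟨ε, hε, h1⟩ := ih fun b hb => hg b (Finset.mem_insert_of_mem hb)
    have hga := hg a (Finset.mem_insert_self a s)
    have hd : 0 < 1 + |h a| := by positivity
    refine ⟨min ε (g a / (1 + |h a|)), lt_min hε (by positivity), fun b hb => ?_⟩
    have hm : 0 < min ε (g a / (1 + |h a|)) := lt_min hε (by positivity)
    rcases Finset.mem_insert.1 hb with rfl | hb'
    · have h2 : min ε (g b / (1 + |h b|)) * (1 + |h b|) ≤ g b := by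
        rw [← le_div_iff₀ hd]
        exact min_le_right _ _
      have h3 := le_abs_self (h b)
      nlinarith
    · have h2 := h1 b hb'
      have h3 := min_le_left ε (g a / (1 + |h a|))
      have h4 := (hg b hb).le
      rcases le_total 0 (h b) with h5 | h5
      · nlinarith
      · nlinarith

/-- The functional attached to a vector through the standard pairing. -/
noncomputable def dotL (w : Fin d → ℝ) : (Fin d → ℝ) →ₗ[ℝ] ℝ := ∑ i, w i • LinearMap.proj i

theorem dotL_apply (w x : Fin d → ℝ) : dotL w x = ∑ i, w i * x i := by
  simp [dotL]

theorem exists_dotL (f : (Fin d → ℝ) →ₗ[ℝ] ℝ) : ∃ w, dotL w = f := by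
  refine ⟨fun i => f (Pi.single i 1), ?_⟩
  ext1 i
  ext
  simp [dotL_apply, Pi.single_apply]

theorem dotL_add (w z x : Fin d → ℝ) : dotL (w + z) x = dotL w x + dotL z x := by
  simp [dotL_apply, add_mul, Finset.sum_add_distrib]

theorem dotL_smul (r : ℝ) (w x : Fin d → ℝ) : dotL (r • w) x = r * dotL w x := by
  simp [dotL_apply, Finset.mul_sum, mul_assoc]

theorem continuous_dotL (x : Fin d → ℝ) : Continuous fun w => dotL w x := by
  simp only [dotL_apply]
  fun_prop

theorem isCompact_polar (hP : Good P) :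
    IsCompact {w : Fin d → ℝ | ∀ v ∈ P.verts, dotL w v ≤ 1} := by
  refine Metric.isCompact_of_isClosed_isBounded ?_ ?_
  · have : {w : Fin d → ℝ | ∀ v ∈ P.verts, dotL w v ≤ 1} =
        ⋂ v ∈ P.verts, {w | dotL w v ≤ 1} := by
      ext w
      simp
    rw [this]
    exact isClosed_biInter fun v _ => isClosed_le (continuous_dotL v) continuous_const
  · have h1 : ∀ i : Fin d, ∃ C : ℝ, 0 ≤ C ∧ ∀ w ∈ {w : Fin d → ℝ | ∀ v ∈ P.verts, dotL w v ≤ 1},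
        |w i| ≤ C := by
      intro i
      obtain ⟨ε, hε, hx⟩ := exists_small hP (Pi.single i 1)
      obtain ⟨δ, hδ, hy⟩ := exists_small hP (-Pi.single i 1)
      refine ⟨max (1 / ε) (1 / δ), by positivity, fun w hw => ?_⟩
      have h2 := carrier_le (f := dotL w) hw hx
      have h3 := carrier_le (f := dotL w) hw hy
      have h4 : dotL w (Pi.single i 1) = w i := by simp [dotL_apply, Pi.single_apply]
      rw [map_smul, h4, smul_eq_mul] at h2
      rw [map_smul, map_neg, h4, smul_eq_mul] at h3
      rw [abs_le]
      constructor
      · have : -w i ≤ 1 / δ := by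
          rw [le_div_iff₀ hδ]
          linarith
        linarith [le_max_right (1 / ε) (1 / δ)]
      · have : w i ≤ 1 / ε := by
          rw [le_div_iff₀ hε]
          linarith
        linarith [le_max_left (1 / ε) (1 / δ)]
    choose C hC0 hC using h1
    refine (Metric.isBounded_iff_subset_closedBall 0).2 ⟨∑ i, C i, fun w hw => ?_⟩
    rw [mem_closedBall_zero_iff, pi_norm_le_iff_of_nonneg (Finset.sum_nonneg fun i _ => hC0 i)]
    intro i
    rw [Real.norm_eq_abs]
    exact (hC i w hw).trans (Finset.single_le_sum (fun j _ => hC0 j) (Finset.mem_univ i))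

/-- The maximum over the polar polytope of a linear form is attained at a facet functional:
an extreme point of the set of maximizers has a spanning set of tight vertices. -/
theorem exists_max (hP : Good P) (c : Fin d → ℝ) : ∃ u, Fac P u ∧
    ∀ f : (Fin d → ℝ) →ₗ[ℝ] ℝ, (∀ v ∈ P.verts, f v ≤ 1) → f c ≤ u c := by
  set Q := {w : Fin d → ℝ | ∀ v ∈ P.verts, dotL w v ≤ 1} with hQ
  have hQc : IsCompact Q := isCompact_polar hP
  have hQn : Q.Nonempty := ⟨0, fun v _ => by simp [dotL_apply]⟩
  obtain ⟨w0, hw0, hmax⟩ := hQc.exists_isMaxOn hQn (continuous_dotL c).continuousOn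
  set M := Q ∩ {w | dotL w c = dotL w0 c} with hM
  have hMc : IsCompact M :=
    hQc.inter_right (isClosed_eq (continuous_dotL c) continuous_const)
  obtain ⟨w, hw⟩ := hMc.extremePoints_nonempty ⟨w0, hw0, rfl⟩
  refine ⟨dotL w, ⟨hw.1.1, ?_⟩, ?_⟩
  · by_contra hne
    obtain ⟨f, hf0, hf⟩ := Submodule.exists_le_ker_of_lt_top _ (lt_top_iff_ne_top.2 hne)
    obtain ⟨z, rfl⟩ := exists_dotL f
    have hz : ∀ v ∈ P.verts, dotL w v = 1 → dotL z v = 0 := fun v hv h =>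
      hf (Submodule.subset_span ⟨hv, h⟩)
    classical
    obtain ⟨ε, hε, he⟩ := exists_eps (P.verts.filter fun v => dotL w v ≠ 1)
      (fun v => 1 - dotL w v) (fun v => |dotL z v|) (by
        intro v hv
        rw [Finset.mem_filter] at hv
        exact sub_pos.2 (lt_of_le_of_ne (hw.1.1 v hv.1) hv.2))
    have hin : ∀ r : ℝ, |r| = ε → w + r • z ∈ Q := by
      intro r hr v hv
      rw [dotL_add, dotL_smul]
      by_cases h1 : dotL w v = 1
      · rw [hz v hv h1, h1]
        simp
      · have h2 := he v (Finset.mem_filter.2 ⟨hv, h1⟩)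
        have h3 : r * dotL z v ≤ ε * |dotL z v| := by
          rw [← hr, ← abs_mul]
          exact le_abs_self _
        linarith
    have hp := hin ε (abs_of_pos hε)
    have hm := hin (-ε) (by rw [abs_neg, abs_of_pos hε])
    have hwc : dotL w c = dotL w0 c := hw.1.2
    have hpc : dotL (w + ε • z) c ≤ dotL w0 c := hmax hp
    have hmc : dotL (w + (-ε) • z) c ≤ dotL w0 c := hmax hm
    rw [dotL_add, dotL_smul] at hpc hmc
    have hzc : ε * dotL z c = 0 := by linarith
    have hpM : w + ε • z ∈ M := ⟨hp, by
      change dotL _ c = _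
      rw [dotL_add, dotL_smul]
      linarith⟩
    have hmM : w + (-ε) • z ∈ M := ⟨hm, by
      change dotL _ c = _
      rw [dotL_add, dotL_smul]
      linarith⟩
    have hseg : w ∈ openSegment ℝ (w + ε • z) (w + (-ε) • z) :=
      ⟨1 / 2, 1 / 2, by norm_num, by norm_num, by norm_num, by module⟩
    have h5 := hw.2 hpM hmM hseg
    have h6 : ε • z = 0 := by simpa using h5
    have h7 : z = 0 := (smul_eq_zero.1 h6).resolve_left hε.ne'
    apply hf0
    rw [h7]
    ext
    simp [dotL_apply]
  · intro f hf
    obtain ⟨z, rfl⟩ := exists_dotL f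
    have h1 : dotL w c = dotL w0 c := hw.1.2
    rw [h1]
    exact hmax hf

/-- Every point lies in the cone over some facet. -/
theorem exists_special (hP : Good P) (c : Fin d → ℝ) :
    ∃ u, Fac P u ∧ ∀ v ∈ T P u, 0 ≤ co P u v c := by
  obtain ⟨u, hu, hmax⟩ := exists_max hP c
  refine ⟨u, hu, fun v hv => ?_⟩
  by_contra! hneg
  classical
  obtain ⟨ε, hε, he⟩ := exists_eps (P.verts.filter fun v => u v ≠ 1)
      (fun x => 1 - u x) (fun x => - co P u v x) (by
        intro v hv
        rw [Finset.mem_filter] at hv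
        exact sub_pos.2 (lt_of_le_of_ne (hu.1 v hv.1) hv.2))
  have h := hmax (u - ε • co P u v) (by
    intro x hx
    simp only [LinearMap.sub_apply, LinearMap.smul_apply, smul_eq_mul]
    by_cases h1 : u x = 1
    · have := hu.co_nonneg hP hv (mem_T.2 ⟨hx, h1⟩)
      nlinarith
    · have h2 := he x (Finset.mem_filter.2 ⟨hx, h1⟩)
      linarith)
  simp only [LinearMap.sub_apply, LinearMap.smul_apply, smul_eq_mul] at h
  nlinarith

theorem mem_carrier (hP : Good P) {x : Fin d → ℝ} (h : ∀ u, Fac P u → u x ≤ 1) :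
    x ∈ P.carrier := by
  by_contra hx
  have hcl : IsClosed P.carrier := P.verts.finite_toSet.isClosed_convexHull ℝ
  obtain ⟨f, s, h1, h2⟩ := geometric_hahn_banach_closed_point (convex_convexHull ℝ _) hcl hx
  have hs : 0 < s := by simpa using h1 0 (zero_mem hP)
  obtain ⟨u, hu, hmax⟩ := exists_max hP x
  have h3 := hmax (s⁻¹ • (f : (Fin d → ℝ) →ₗ[ℝ] ℝ)) (by
    intro v hv
    have := h1 v (vert_mem hv)
    simp only [LinearMap.smul_apply, smul_eq_mul, ContinuousLinearMap.coe_coe]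
    rw [inv_mul_le_iff₀ hs]
    linarith)
  have h4 := h u hu
  simp only [LinearMap.smul_apply, smul_eq_mul, ContinuousLinearMap.coe_coe] at h3
  have h5 : s⁻¹ * f x ≤ 1 := h3.trans h4
  rw [inv_mul_le_iff₀ hs] at h5
  linarith

/-- Terminality in dual form. -/
theorem lat_mem (hP : Good P) {x : Fin d → ℝ} (hx : IsLatticePt x)
    (h : ∀ u, Fac P u → u x ≤ 1) : x = 0 ∨ x ∈ P.verts :=
  hP.term x (mem_carrier hP h) hx

theorem lat_vert (hP : Good P) {x : Fin d → ℝ} (hx : x ∈ P.verts) : IsLatticePt x :=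
  hP.refl.1 x hx

theorem midpoint_eq {x a b : Fin d → ℝ} (hx : x ∈ P.verts) (ha : a ∈ P.carrier)
    (hb : b ∈ P.carrier) (h : a + b = (2 : ℝ) • x) : a = x := by
  have hs : x ∈ openSegment ℝ a b := by
    refine ⟨1 / 2, 1 / 2, by norm_num, by norm_num, by norm_num, ?_⟩
    rw [← smul_add, h, smul_smul]
    norm_num
  exact (P.vertsExtreme x hx).2 ha hb hs

theorem zero_notMem (hP : Good P) : (0 : Fin d → ℝ) ∉ P.verts := by
  intro h0
  let e : Fin d → ℝ := fun _ => 1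
  obtain ⟨ε, hε, hx⟩ := exists_small hP e
  obtain ⟨δ, hδ, hy⟩ := exists_small hP (-e)
  have hs : (0 : Fin d → ℝ) ∈ openSegment ℝ (ε • e) (δ • -e) := by
    refine ⟨δ / (ε + δ), ε / (ε + δ), by positivity, by positivity, by field_simp; ring, ?_⟩
    rw [smul_smul, smul_smul, smul_neg, div_mul_eq_mul_div, div_mul_eq_mul_div, mul_comm δ ε]
    simp
  have h1 := (P.vertsExtreme 0 h0).2 hx hy hs
  have h2 := congrFun h1 ⟨0, hP.pos⟩
  simp [e] at h2
  exact hε.ne' h2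

theorem ne_zero (hP : Good P) {x : Fin d → ℝ} (hx : x ∈ P.verts) : x ≠ 0 := by
  rintro rfl
  exact zero_notMem hP hx

theorem exists_fac_mem (hP : Good P) {x : Fin d → ℝ} (hx : x ∈ P.verts) :
    ∃ u, Fac P u ∧ u x = 1 := by
  by_contra! hne
  have h2 : (2 : ℝ) • x ∈ P.carrier := by
    refine mem_carrier hP fun u hu => ?_
    have h1 := (hu.isI hP (lat_vert hP hx)).lt isI_one (lt_of_le_of_ne (hu.1 x hx) (hne u hu))
    rw [map_smul, smul_eq_mul]
    linarith
  have h3 := midpoint_eq hx h2 (zero_mem hP) (by simp)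
  apply ne_zero hP hx
  have : (2 : ℝ) • x - x = 0 := by rw [h3, sub_self]
  rw [← this]
  module

/-- Two vertices on no common facet add up to zero or to a vertex. -/
theorem add_mem (hP : Good P) {x y : Fin d → ℝ} (hx : x ∈ P.verts) (hy : y ∈ P.verts)
    (h : ∀ u, Fac P u → u x = 1 → u y ≠ 1) : x + y = 0 ∨ x + y ∈ P.verts := by
  refine lat_mem hP (lat_add (lat_vert hP hx) (lat_vert hP hy)) fun u hu => ?_
  rw [map_add]
  by_cases h1 : u x = 1
  · have := (hu.isI hP (lat_vert hP hy)).lt isI_one (lt_of_le_of_ne (hu.1 y hy) (h u hu h1))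
    linarith
  · have := (hu.isI hP (lat_vert hP hx)).lt isI_one (lt_of_le_of_ne (hu.1 x hx) h1)
    have := hu.1 y hy
    linarith

theorem Fac.le_zero (hP : Good P) (hu : Fac P u) {x : Fin d → ℝ} (hx : x ∈ P.verts)
    (h : u x ≠ 1) : u x ≤ 0 := by
  have := (hu.isI hP (lat_vert hP hx)).lt isI_one (lt_of_le_of_ne (hu.1 x hx) h)
  linarith

/-- The functional of a candidate neighboring facet: it is a facet functional as soon as it is
at most `1` on `P` and reaches the value `1` at a vertex with nonzero coordinate at `v`. -/
theorem Fac.pivot (hP : Good P) (hu : Fac P u) {v n : Fin d → ℝ} (hv : v ∈ T P u)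
    {t : ℝ} (hle : ∀ x ∈ P.verts, u x - t * co P u v x ≤ 1) (hn : n ∈ P.verts)
    (hn1 : u n - t * co P u v n = 1) (hn0 : co P u v n ≠ 0) (hnT : n ∉ T P u) :
    Fac P (u - t • co P u v) ∧
      ∀ x, x ∈ T P (u - t • co P u v) ↔ x = n ∨ (x ∈ T P u ∧ x ≠ v) := by
  classical
  have hsub : ∀ x, (x = n ∨ (x ∈ T P u ∧ x ≠ v)) → x ∈ T P (u - t • co P u v) := by
    rintro x (rfl | ⟨hx, hne⟩)
    · rw [mem_T]
      exact ⟨hn, by simpa using hn1⟩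
    · rw [mem_T]
      refine ⟨(mem_T.1 hx).1, ?_⟩
      simp [hu.co_ne hP hv hx hne, (mem_T.1 hx).2]
  have hfac : Fac P (u - t • co P u v) := by
    refine ⟨fun x hx => by simpa using hle x hx, ?_⟩
    rw [← coe_T, eq_top_iff, ← hu.2, Submodule.span_le]
    set S := Submodule.span ℝ ((T P (u - t • co P u v) : Finset _) : Set (Fin d → ℝ)) with hS
    have h1 : ∀ w ∈ T P u, w ≠ v → w ∈ S := fun w hw hne =>
      Submodule.subset_span (hsub w (Or.inr ⟨hw, hne⟩))
    have h2 : n ∈ S := Submodule.subset_span (hsub n (Or.inl rfl))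
    intro w hw
    have hw' : w ∈ T P u := mem_T.2 hw
    by_cases hne : w = v
    · subst hne
      have he := hu.expand hP n
      rw [← Finset.add_sum_erase _ _ hw'] at he
      have h3 : ∑ x ∈ (T P u).erase w, co P u x n • x ∈ S :=
        Submodule.sum_mem _ fun x hx => Submodule.smul_mem _ _
          (h1 x (Finset.mem_of_mem_erase hx) (Finset.ne_of_mem_erase hx))
      have h4 : co P u w n • w ∈ S := by
        have : co P u w n • w = n - ∑ x ∈ (T P u).erase w, co P u x n • x := by
          rw [eq_sub_iff_add_eq]
          exact he.symm
        rw [this]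
        exact Submodule.sub_mem _ h2 h3
      exact (Submodule.smul_mem_iff _ hn0).1 h4
    · exact h1 w hw' hne
  refine ⟨hfac, fun x => ⟨fun hx => ?_, hsub x⟩⟩
  have hss : insert n ((T P u).erase v) ⊆ T P (u - t • co P u v) := by
    intro y hy
    rw [Finset.mem_insert, Finset.mem_erase] at hy
    exact hsub y (by tauto)
  have hcard : (insert n ((T P u).erase v)).card = d := by
    rw [Finset.card_insert_of_notMem fun h => hnT (Finset.mem_of_mem_erase h),
      Finset.card_erase_of_mem hv, hu.card_T hP]
    have := hP.pos
    omega
  have heq := Finset.eq_of_subset_of_card_le hss (by rw [hcard, hfac.card_T hP])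
  rw [← heq, Finset.mem_insert, Finset.mem_erase] at hx
  tauto

/-- Every facet has a neighboring facet across each of its vertices. -/
theorem Fac.neighbor (hP : Good P) (hu : Fac P u) {v : Fin d → ℝ} (hv : v ∈ T P u) :
    ∃ (t : ℝ) (n : Fin d → ℝ), 0 < t ∧ n ∈ P.verts ∧ n ∉ T P u ∧ co P u v n < 0 ∧
      Fac P (u - t • co P u v) ∧
      ∀ x, x ∈ T P (u - t • co P u v) ↔ x = n ∨ (x ∈ T P u ∧ x ≠ v) := by
  classical
  have hex : ∃ x ∈ P.verts, co P u v x < 0 := by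
    by_contra! h
    have h1 := eq_zero_of_nonneg hP h
    have h2 := hu.co_self hP hv
    rw [h1] at h2
    simp at h2
  obtain ⟨x0, hx0, hx0n⟩ := hex
  obtain ⟨n, hn, hmin⟩ := Finset.exists_min_image (P.verts.filter fun x => co P u v x < 0)
    (fun x => (1 - u x) / (- co P u v x)) ⟨x0, Finset.mem_filter.2 ⟨hx0, hx0n⟩⟩
  obtain ⟨hnV, hn0⟩ := Finset.mem_filter.1 hn
  have hnT : n ∉ T P u := fun h => absurd (hu.co_nonneg hP hv h) (not_le.2 hn0)
  have hlt : u n < 1 := lt_of_le_of_ne (hu.1 n hnV) fun h => hnT (mem_T.2 ⟨hnV, h⟩)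
  set t := (1 - u n) / (- co P u v n) with ht
  have ht0 : 0 < t := div_pos (by linarith) (by linarith)
  have htn : t * (- co P u v n) = 1 - u n := by
    rw [ht]
    exact div_mul_cancel₀ _ (by linarith)
  have := hu.pivot hP hv (t := t) (n := n) (fun x hx => ?_) hnV (by linarith) hn0.ne hnT
  · exact ⟨t, n, ht0, hnV, hnT, hn0, this⟩
  · have hux := hu.1 x hx
    rcases lt_or_ge (co P u v x) 0 with h | h
    · have h1 := hmin x (Finset.mem_filter.2 ⟨hx, h⟩)
      have h2 : t * (- co P u v x) ≤ 1 - u x := by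
        rw [← le_div_iff₀ (by linarith)]
        exact h1
      linarith
    · have := mul_nonneg ht0.le h
      linarith

/-! ### Facets with `d` vertices at height zero -/

theorem Fac.co_eq (hP : Good P) (hu : Fac P u) {v : Fin d → ℝ} (hv : v ∈ T P u)
    {f : (Fin d → ℝ) →ₗ[ℝ] ℝ} (h1 : f v = 1) (h0 : ∀ w ∈ T P u, w ≠ v → f w = 0) :
    co P u v = f := by
  refine hu.ext fun w hw => ?_
  by_cases h : w = v
  · rw [h, hu.co_self hP hv, h1]
  · rw [hu.co_ne hP hv hw h, h0 w hw h]

/-- A nonzero point of height zero has a negative coordinate. -/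
theorem Fac.exists_neg (hP : Good P) (hu : Fac P u) {x : Fin d → ℝ} (hx : x ≠ 0)
    (h : u x = 0) : ∃ v ∈ T P u, co P u v x < 0 := by
  by_contra! hne
  apply hx
  have := hu.eq_zero_of_nonpos hP (x := -x) (fun v hv => by simpa using hne v hv) (by simp [h])
  simpa using this

/-- A vertex of height zero is the neighboring vertex across each of its negative coordinates,
because it has positive integral height over the neighboring facet. -/
theorem Fac.neighbor_zero (hP : Good P) (hu : Fac P u) {v x n : Fin d → ℝ} {t : ℝ}
    (ht : 0 < t) (hf : Fac P (u - t • co P u v))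
    (hT : ∀ x, x ∈ T P (u - t • co P u v) ↔ x = n ∨ (x ∈ T P u ∧ x ≠ v))
    (hx : x ∈ P.verts) (h0 : u x = 0) (hneg : co P u v x < 0) : x = n := by
  have h1 : (u - t • co P u v) x = 1 := by
    by_contra h
    have h2 := hf.le_zero hP hx h
    simp only [LinearMap.sub_apply, LinearMap.smul_apply, smul_eq_mul] at h2
    nlinarith
  rcases (hT x).1 (mem_T.2 ⟨hx, h1⟩) with h | h
  · exact h
  · have := (mem_T.1 h.1).2
    linarith

/-- Crossing a vertex `v` towards a vertex of height `0` whose `v`-coordinate is `-1`. -/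
theorem Fac.step (hP : Good P) (hu : Fac P u) {v x : Fin d → ℝ} (hv : v ∈ T P u)
    (hx : x ∈ P.verts) (h0 : u x = 0) (hneg : co P u v x = -1) :
    Fac P (u - co P u v) ∧
      ∀ y, y ∈ T P (u - co P u v) ↔ y = x ∨ (y ∈ T P u ∧ y ≠ v) := by
  obtain ⟨t, n, ht, hn, hnT, hn0, hf, hT⟩ := hu.neighbor hP hv
  have hxn := hu.neighbor_zero hP ht hf hT hx h0 (by rw [hneg]; norm_num)
  subst hxn
  have h1 := (mem_T.1 ((hT x).2 (Or.inl rfl))).2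
  simp only [LinearMap.sub_apply, LinearMap.smul_apply, smul_eq_mul, h0, hneg] at h1
  have ht1 : t = 1 := by linarith
  rw [ht1, one_smul] at hf hT
  exact ⟨hf, hT⟩

open Classical in
/-- The vertices of height zero over a facet. -/
noncomputable def H0 (P : Polytope d) (u : (Fin d → ℝ) →ₗ[ℝ] ℝ) : Finset (Fin d → ℝ) :=
  P.verts.filter fun v => u v = 0

theorem mem_H0 {v : Fin d → ℝ} : v ∈ H0 P u ↔ v ∈ P.verts ∧ u v = 0 := by
  classical
  simp [H0]

/-- The neighboring vertices `n v` of a facet account for all vertices of height zero with a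
negative coordinate at `v`. -/
theorem Fac.exists_nb (hP : Good P) (hu : Fac P u) : ∃ n : (Fin d → ℝ) → (Fin d → ℝ),
    ∀ v ∈ T P u, ∀ x ∈ P.verts, u x = 0 → co P u v x < 0 → x = n v := by
  have h : ∀ v, ∃ n, v ∈ T P u → ∀ x ∈ P.verts, u x = 0 → co P u v x < 0 → x = n := by
    intro v
    by_cases hv : v ∈ T P u
    · obtain ⟨t, n, ht, hn, hnT, hn0, hf, hT⟩ := hu.neighbor hP hv
      exact ⟨n, fun _ x hx h0 h1 => hu.neighbor_zero hP ht hf hT hx h0 h1⟩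
    · exact ⟨0, fun h => absurd h hv⟩
  choose n hn using h
  exact ⟨n, hn⟩

theorem Fac.H0_subset [DecidableEq (Fin d → ℝ)] (hP : Good P) (hu : Fac P u)
    {n : (Fin d → ℝ) → (Fin d → ℝ)}
    (hn : ∀ v ∈ T P u, ∀ x ∈ P.verts, u x = 0 → co P u v x < 0 → x = n v) :
    H0 P u ⊆ (T P u).image n := by
  intro x hx
  rw [mem_H0] at hx
  obtain ⟨v, hv, hneg⟩ := hu.exists_neg hP (ne_zero hP hx.1) hx.2
  exact Finset.mem_image.2 ⟨v, hv, (hn v hv x hx.1 hx.2 hneg).symm⟩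

theorem Fac.card_H0_le (hP : Good P) (hu : Fac P u) : (H0 P u).card ≤ d := by
  classical
  obtain ⟨n, hn⟩ := hu.exists_nb hP
  calc (H0 P u).card ≤ ((T P u).image n).card := Finset.card_le_card (hu.H0_subset hP hn)
    _ ≤ (T P u).card := Finset.card_image_le
    _ = d := hu.card_T hP

/-- A facet functional with the maximal number `d` of vertices at height zero. -/
def Full (P : Polytope d) (u : (Fin d → ℝ) →ₗ[ℝ] ℝ) : Prop := Fac P u ∧ d ≤ (H0 P u).card

/-- Over a full facet, taking the neighboring vertex is a bijection from the vertices of the facet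
onto the vertices of height zero, and each of the latter has only one negative coordinate. -/
theorem Full.bij (hP : Good P) (hu : Full P u) :
    (∀ v ∈ T P u, ∃ x ∈ P.verts, u x = 0 ∧ co P u v x < 0) ∧
    (∀ v ∈ T P u, ∀ w ∈ T P u, ∀ x ∈ P.verts, u x = 0 → co P u v x < 0 → co P u w x < 0 →
      v = w) ∧
    (∀ v ∈ T P u, ∀ x ∈ P.verts, ∀ y ∈ P.verts, u x = 0 → u y = 0 → co P u v x < 0 →
      co P u v y < 0 → x = y) := by
  classical
  obtain ⟨n, hn⟩ := hu.1.exists_nb hP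
  have hsub := hu.1.H0_subset hP hn
  have hle : ((T P u).image n).card ≤ (H0 P u).card :=
    (Finset.card_image_le.trans (hu.1.card_T hP).le).trans hu.2
  have heq := Finset.eq_of_subset_of_card_le hsub hle
  have hinj : Set.InjOn n (T P u) := by
    rw [← Finset.card_image_iff]
    refine le_antisymm Finset.card_image_le ?_
    rw [← heq, hu.1.card_T hP]
    exact hu.2
  refine ⟨fun v hv => ?_, fun v hv w hw x hx h0 h1 h2 => ?_, fun v hv x hx y hy h0 h0' h1 h2 => ?_⟩
  · have h1 : n v ∈ H0 P u := heq ▸ Finset.mem_image_of_mem n hv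
    rw [mem_H0] at h1
    obtain ⟨w, hw, hneg⟩ := hu.1.exists_neg hP (ne_zero hP h1.1) h1.2
    have h2 := hn w hw _ h1.1 h1.2 hneg
    have h3 := hinj hv hw h2
    subst h3
    exact ⟨n v, h1.1, h1.2, hneg⟩
  · exact hinj hv hw ((hn v hv x hx h0 h1).symm.trans (hn w hw x hx h0 h2))
  · exact (hn v hv x hx h0 h1).trans (hn v hv y hy h0' h2).symm

/-- Over a full facet a vertex of height zero with negative `v`-coordinate is of the form
`w - v`: it lies on no common facet with `v`, so that adding `v` gives a vertex of the facet. -/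
theorem Full.add_mem (hP : Good P) (hu : Full P u) {v x : Fin d → ℝ} (hv : v ∈ T P u)
    (hx : x ∈ P.verts) (h0 : u x = 0) (hneg : co P u v x < 0) : x + v ∈ T P u := by
  have h := TSR.add_mem hP (mem_T.1 hv).1 hx fun g hg hgv hgx => by
    have h1 : g x ≤ u x := by
      rw [hu.1.apply_eq_sum hP g x, hu.1.eq_sum_co hP x]
      refine Finset.sum_le_sum fun w hw => ?_
      by_cases hwv : w = v
      · rw [hwv, hgv, mul_one]
      · have h2 : 0 ≤ co P u w x := by
          by_contra! h3
          exact hwv ((hu.bij hP).2.1 w hw v hv x hx h0 h3 hneg)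
        have h3 := hg.1 w (mem_T.1 hw).1
        nlinarith
    linarith
  have hv1 := (mem_T.1 hv).2
  rw [add_comm] at h
  rcases h with h | h
  · have h1 : u (x + v) = 0 := by rw [h, map_zero]
    rw [map_add, h0, hv1] at h1
    norm_num at h1
  · rw [mem_T]
    exact ⟨h, by rw [map_add, h0, hv1, zero_add]⟩

theorem Full.ne (hP : Good P) {v w : Fin d → ℝ}
    (hx : w - v ∈ P.verts) : w ≠ v := by
  rintro rfl
  rw [sub_self] at hx
  exact zero_notMem hP hx

theorem Fac.co_sub (hP : Good P) (hu : Fac P u) {v w : Fin d → ℝ} (hv : v ∈ T P u)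
    (hw : w ∈ T P u) (hx : w - v ∈ P.verts) : co P u v (w - v) = -1 := by
  rw [map_sub, hu.co_self hP hv, hu.co_ne hP hv hw (Full.ne hP hx)]
  norm_num

theorem Fac.sub_zero {v w : Fin d → ℝ} (hv : v ∈ T P u)
    (hw : w ∈ T P u) : u (w - v) = 0 := by
  rw [map_sub, (mem_T.1 hv).2, (mem_T.1 hw).2, sub_self]

theorem Full.exists_phi (hP : Good P) (hu : Full P u) {v : Fin d → ℝ} (hv : v ∈ T P u) :
    ∃ w ∈ T P u, w - v ∈ P.verts := by
  obtain ⟨x, hx, h0, h1⟩ := (hu.bij hP).1 v hv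
  exact ⟨x + v, hu.add_mem hP hv hx h0 h1, by simpa using hx⟩

theorem Full.form (hP : Good P) (hu : Full P u) {x : Fin d → ℝ} (hx : x ∈ P.verts)
    (h0 : u x = 0) : ∃ v ∈ T P u, ∃ w ∈ T P u, w ≠ v ∧ x = w - v := by
  obtain ⟨v, hv, hneg⟩ := hu.1.exists_neg hP (ne_zero hP hx) h0
  refine ⟨v, hv, x + v, hu.add_mem hP hv hx h0 hneg, ?_, by simp⟩
  simpa using ne_zero hP hx

theorem Full.eq_sub (hP : Good P) (hu : Full P u) {x v w : Fin d → ℝ} (hv : v ∈ T P u)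
    (hw : w ∈ T P u) (hwv : w - v ∈ P.verts) (hx : x ∈ P.verts) (h0 : u x = 0)
    (hneg : co P u v x < 0) : x = w - v := by
  refine (hu.bij hP).2.2 v hv x hx _ hwv h0 (Fac.sub_zero hv hw) hneg ?_
  rw [hu.1.co_sub hP hv hw hwv]
  norm_num

theorem Full.unique (hP : Good P) (hu : Full P u) {v w z : Fin d → ℝ} (hv : v ∈ T P u)
    (hw : w ∈ T P u) (hz : z ∈ T P u) (hwv : w - v ∈ P.verts) (hzv : z - v ∈ P.verts) :
    z = w := by
  have := hu.eq_sub hP hv hw hwv hzv (Fac.sub_zero hv hz) (by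
    rw [hu.1.co_sub hP hv hz hzv]
    norm_num)
  simpa using this

theorem Full.step (hP : Good P) (hu : Full P u) {v w : Fin d → ℝ} (hv : v ∈ T P u)
    (hw : w ∈ T P u) (hwv : w - v ∈ P.verts) :
    Fac P (u - co P u v) ∧
      ∀ y, y ∈ T P (u - co P u v) ↔ y = w - v ∨ (y ∈ T P u ∧ y ≠ v) :=
  hu.1.step hP hv hwv (Fac.sub_zero hv hw) (hu.1.co_sub hP hv hw hwv)

theorem Full.fac_step (hP : Good P) (hu : Full P u) {v : Fin d → ℝ} (hv : v ∈ T P u) :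
    Fac P (u - co P u v) := by
  obtain ⟨w, hw, hwv⟩ := hu.exists_phi hP hv
  exact (hu.step hP hv hw hwv).1

/-- The vertices of a full facet form a lattice basis: all coordinates are integral. -/
theorem Full.isI_co (hP : Good P) (hu : Full P u) {v x : Fin d → ℝ} (hv : v ∈ T P u)
    (hx : IsLatticePt x) : IsI (co P u v x) := by
  have h := (hu.1.isI hP hx).sub ((hu.fac_step hP hv).isI hP hx)
  simpa using h

/-- For otherwise `x` would have positive height over the neighboring facet across `v`, so it would
be one of its vertices, which all have height `0` or `1` over the given facet. -/
theorem Full.co_ge (hP : Good P) (hu : Full P u) {v x : Fin d → ℝ} (hv : v ∈ T P u)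
    (hx : x ∈ P.verts) (h0 : u x < 0) : u x ≤ co P u v x := by
  obtain ⟨w, hw, hwv⟩ := hu.exists_phi hP hv
  obtain ⟨hf, hT⟩ := hu.step hP hv hw hwv
  have h1 : (u - co P u v) x ≠ 1 := by
    intro h
    rcases (hT x).1 (mem_T.2 ⟨hx, h⟩) with h2 | h2
    · rw [h2, Fac.sub_zero hv hw] at h0
      exact lt_irrefl _ h0
    · have := (mem_T.1 h2.1).2
      linarith
  have h2 := hf.le_zero hP hx h1
  simpa using h2

/-- A lattice point of negative height has a coordinate at most `-1`, as the height is the sum of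
the coordinates and these are integers. -/
theorem Full.exists_le (hP : Good P) (hu : Full P u) {x : Fin d → ℝ} (hx : IsLatticePt x)
    (h0 : u x < 0) : ∃ v ∈ T P u, co P u v x ≤ -1 := by
  by_contra! h
  have h1 : 0 ≤ u x := by
    rw [hu.1.eq_sum_co hP x]
    refine Finset.sum_nonneg fun v hv => ?_
    have := (isI_one.neg).lt (hu.isI_co hP hv hx) (h v hv)
    linarith
  linarith

theorem T_lat (hP : Good P) {v : Fin d → ℝ} (hv : v ∈ T P u) : IsLatticePt v :=
  lat_vert hP (mem_T.1 hv).1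

theorem T_one {v : Fin d → ℝ} (hv : v ∈ T P u) : u v = 1 := (mem_T.1 hv).2

/-- Adding to `x` a vertex `v` along which its coordinate is at most `-1` yields a point of height
zero with nonpositive coordinates, that is, the origin. -/
theorem Full.eq_neg (hP : Good P) (hu : Full P u) {x : Fin d → ℝ} (hx : IsLatticePt x)
    (h0 : u x = -1) (h : ∀ v ∈ T P u, co P u v x ≤ 0) : ∃ v ∈ T P u, x = -v := by
  obtain ⟨v, hv, h1⟩ := hu.exists_le hP hx (by rw [h0]; norm_num)
  refine ⟨v, hv, ?_⟩
  rw [eq_neg_iff_add_eq_zero]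
  refine hu.1.eq_zero_of_nonpos hP (fun w hw => ?_) ?_
  · rw [map_add]
    by_cases hwv : w = v
    · subst hwv
      rw [hu.1.co_self hP hv]
      linarith
    · rw [hu.1.co_ne hP hw hv (Ne.symm hwv)]
      linarith [h w hw]
  · rw [map_add, h0, T_one hv]
    norm_num

theorem Full.eq_neg_sub (hP : Good P) (hu : Full P u) {x : Fin d → ℝ} (hx : IsLatticePt x)
    (h0 : u x = -2) (h : ∀ v ∈ T P u, co P u v x ≤ 0) :
    ∃ v ∈ T P u, ∃ w ∈ T P u, x = -v - w := by
  obtain ⟨v, hv, h1⟩ := hu.exists_le hP hx (by rw [h0]; norm_num)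
  obtain ⟨w, hw, h2⟩ := hu.eq_neg hP (lat_add hx (T_lat hP hv))
    (by rw [map_add, h0, T_one hv]; norm_num) (fun w hw => by
      rw [map_add]
      by_cases hwv : w = v
      · subst hwv
        rw [hu.1.co_self hP hv]
        linarith
      · rw [hu.1.co_ne hP hw hv (Ne.symm hwv)]
        linarith [h w hw])
  exact ⟨v, hv, w, hw, by rw [eq_sub_iff_add_eq, eq_neg_iff_add_eq_zero] at *; rw [← h2]; abel⟩

/-! ### Counting vertices by height -/

/-- The sum of all vertices. -/
noncomputable def nu (P : Polytope d) : Fin d → ℝ := ∑ v ∈ P.verts, v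

/-- The count behind everything: with `3d - 1` vertices, the amounts `g` by which the vertices of
negative height lie below height `-1` add up to `η_0 - d + 1 - ⟨u_F, ν_P⟩`, where `η_0 ≤ d` is the
number of vertices at height `0`. -/
theorem Fac.defect (hP : Good P) (hc : (P.verts.card : ℤ) = 3 * d - 1) (hu : Fac P u) :
    ∃ g : (Fin d → ℝ) → ℝ, (∀ v ∈ P.verts, 0 ≤ g v) ∧
      (∀ v ∈ P.verts, u v < 0 → u v = -1 - g v) ∧
      ∑ v ∈ P.verts, g v = (H0 P u).card - d + 1 - u (nu P) := by
  classical
  refine ⟨fun v => 2 * (if u v = 1 then 1 else 0) + (if u v = 0 then 1 else 0) - 1 - u v,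
    fun v hv => ?_, fun v hv h => ?_, ?_⟩
  · by_cases h1 : u v = 1
    · simp only [h1]
      norm_num
    by_cases h0 : u v = 0
    · simp only [h0]
      norm_num
    simp only [h1, h0, if_false]
    have h2 := lt_of_le_of_ne (hu.le_zero hP hv h1) h0
    have := (hu.isI hP (lat_vert hP hv)).lt isI_zero h2
    linarith
  · have h1 : u v ≠ 1 := by linarith
    simp only [h1, h.ne, if_false]
    ring
  · have hc' : (P.verts.card : ℝ) = 3 * d - 1 := by exact_mod_cast hc
    have hT : ((P.verts.filter fun v => u v = 1).card : ℝ) = d := by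
      have : P.verts.filter (fun v => u v = 1) = T P u := by
        ext v
        simp [mem_T]
      rw [this, hu.card_T hP]
    have hH : P.verts.filter (fun v => u v = 0) = H0 P u := by
      ext v
      simp [mem_H0]
    rw [Finset.sum_sub_distrib, Finset.sum_sub_distrib, Finset.sum_add_distrib, ← Finset.mul_sum,
      Finset.sum_boole, Finset.sum_boole, hT, hH, nu, map_sum]
    simp only [Finset.sum_const, nsmul_eq_mul, mul_one, hc']
    ring

theorem Fac.card_H0_le_real (hP : Good P) (hu : Fac P u) : ((H0 P u).card : ℝ) ≤ d := by
  exact_mod_cast hu.card_H0_le hP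

/-- Facets on which the sum of all vertices has positive height are full, and no vertex lies below
height `-1`. -/
theorem Fac.full_of_one_le (hP : Good P) (hc : (P.verts.card : ℤ) = 3 * d - 1) (hu : Fac P u)
    (h : 1 ≤ u (nu P)) : Full P u ∧ u (nu P) = 1 ∧ ∀ x ∈ P.verts, -1 ≤ u x := by
  obtain ⟨g, hg0, hg, hs⟩ := hu.defect hP hc
  have h1 := hu.card_H0_le_real hP
  have h2 := Finset.sum_nonneg hg0
  have h3 : (d : ℝ) ≤ (H0 P u).card := by linarith
  refine ⟨⟨hu, by exact_mod_cast h3⟩, by linarith, fun x hx => ?_⟩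
  have h4 := Finset.single_le_sum hg0 hx
  by_contra! hlt
  have := hg x hx (by linarith)
  linarith

/-- The hypotheses in the case where the vertices sum up to zero. -/
structure ZeroSum (P : Polytope d) : Prop where
  good : Good P
  card : (P.verts.card : ℤ) = 3 * d - 1
  sum : nu P = 0

/-- If the vertices sum up to zero, at most one vertex lies below height `-1`, by just one step, and
only below a full facet. -/
theorem ZeroSum.full (hP : ZeroSum P) (hu : Fac P u) {y : Fin d → ℝ} (hy : y ∈ P.verts)
    (h : u y < -1) : Full P u ∧ u y = -2 ∧ ∀ x ∈ P.verts, x ≠ y → -1 ≤ u x := by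
  classical
  obtain ⟨g, hg0, hg, hs⟩ := hu.defect hP.good hP.card
  rw [hP.sum, map_zero] at hs
  have h1 := hu.card_H0_le_real hP.good
  have hgy := hg y hy (by linarith)
  have hI := (hu.isI hP.good (lat_vert hP.good hy)).lt isI_one.neg h
  have h4 := Finset.single_le_sum hg0 hy
  have h3 : (d : ℝ) ≤ (H0 P u).card := by linarith
  refine ⟨⟨hu, by exact_mod_cast h3⟩, by linarith, fun x hx hne => ?_⟩
  rw [← Finset.add_sum_erase _ _ hy] at hs
  have h5 : g x ≤ ∑ v ∈ P.verts.erase y, g v :=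
    Finset.single_le_sum (fun v hv => hg0 v (Finset.mem_of_mem_erase hv))
      (Finset.mem_erase.2 ⟨hne, hx⟩)
  by_contra! hlt
  have := hg x hx (by linarith)
  linarith

theorem ZeroSum.ge (hP : ZeroSum P) (hu : Fac P u) {y : Fin d → ℝ} (hy : y ∈ P.verts) :
    -2 ≤ u y := by
  by_contra! h
  have := (hP.full hu hy (by linarith)).2.1
  linarith

/-! ### Vertices summing up to zero: facets with a vertex at height `-2` -/

/-- The facet of `u` has a vertex at height `-2`, namely `-a - b` with `a`, `b` on the facet. -/
def Spec (P : Polytope d) (u : (Fin d → ℝ) →ₗ[ℝ] ℝ) (a b : Fin d → ℝ) : Prop :=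
  Fac P u ∧ a ∈ T P u ∧ b ∈ T P u ∧ -a - b ∈ P.verts

variable {a b : Fin d → ℝ}

theorem Spec.symm (h : Spec P u a b) : Spec P u b a :=
  ⟨h.1, h.2.2.1, h.2.1, by rw [neg_sub_left, add_comm, ← neg_sub_left]; exact h.2.2.2⟩

theorem Spec.height (h : Spec P u a b) : u (-a - b) = -2 := by
  rw [map_sub, map_neg, T_one h.2.1, T_one h.2.2.1]
  norm_num

theorem Spec.full (hP : ZeroSum P) (h : Spec P u a b) :
    Full P u ∧ ∀ x ∈ P.verts, x ≠ -a - b → -1 ≤ u x := by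
  have := hP.full h.1 h.2.2.2 (by rw [h.height]; norm_num)
  exact ⟨this.1, this.2.2⟩

theorem Spec.ne (hP : ZeroSum P) (h : Spec P u a b) : a ≠ b := by
  rintro rfl
  obtain ⟨g, hg, hg1⟩ := exists_fac_mem hP.good h.2.2.2
  obtain ⟨z, hz⟩ := hg.isI hP.good (T_lat hP.good h.2.1)
  rw [map_sub, map_neg, hz] at hg1
  have h2 : -z - z = 1 := by exact_mod_cast hg1
  omega

theorem ZeroSum.exists_spec (hP : ZeroSum P) (hu : Fac P u) {y : Fin d → ℝ} (hy : y ∈ P.verts)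
    (h : u y < -1) : ∃ a b, Spec P u a b ∧ y = -a - b := by
  obtain ⟨hf, h2, -⟩ := hP.full hu hy h
  obtain ⟨a, ha, b, hb, hab⟩ := hf.eq_neg_sub hP.good (lat_vert hP.good hy) h2 fun v hv => by
    have := hP.ge (hf.fac_step hP.good hv) hy
    simp only [LinearMap.sub_apply] at this
    linarith
  exact ⟨a, b, ⟨hu, ha, hb, hab ▸ hy⟩, hab⟩

/-- Vertices at height `-1` have nonpositive coordinates away from the two special vertices. -/
theorem Spec.co_le (hP : ZeroSum P) (h : Spec P u a b) {v x : Fin d → ℝ} (hv : v ∈ T P u)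
    (hva : v ≠ a) (hvb : v ≠ b) (hx : x ∈ P.verts) (hx1 : u x = -1) : co P u v x ≤ 0 := by
  have hf := (h.full hP).1
  have hy : (u - co P u v) (-a - b) = -2 := by
    rw [LinearMap.sub_apply, h.height, map_sub, map_neg, h.1.co_ne hP.good hv h.2.1 hva.symm,
      h.1.co_ne hP.good hv h.2.2.1 hvb.symm]
    norm_num
  have h1 := (hP.full (hf.fac_step hP.good hv) h.2.2.2 (by rw [hy]; norm_num)).2.2 x hx (by
    rintro rfl
    rw [h.height] at hx1
    norm_num at hx1)
  rw [LinearMap.sub_apply] at h1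
  linarith

/-- The special vertices share no facet with `-a - b`: on such a facet `b` would be at height `-2`,
and its partner `c` over the given facet would have height `-1` and a positive coordinate. -/
theorem Spec.not_common (hP : ZeroSum P) (h : Spec P u a b) {g : (Fin d → ℝ) →ₗ[ℝ] ℝ}
    (hg : Fac P g) (hga : g a = 1) : g (-a - b) ≠ 1 := by
  intro hgy
  have hf := (h.full hP).1
  have hS : Spec P g a (-a - b) := ⟨hg, mem_T.2 ⟨(mem_T.1 h.2.1).1, hga⟩,
    mem_T.2 ⟨h.2.2.2, hgy⟩, by simpa using (mem_T.1 h.2.2.1).1⟩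
  have hgb : g b = -2 := by simpa using hS.height
  obtain ⟨c, hc, hcb⟩ := hf.exists_phi hP.good h.2.2.1
  have hne := Full.ne hP.good hcb
  have h1 := (hS.full hP).2 c (mem_T.1 hc).1 (by simpa using hne)
  have h2 := hg.1 _ hcb
  rw [map_sub, hgb] at h2
  have hgc : g c = -1 := by linarith
  have hcT : c - b ∈ T P g := mem_T.2 ⟨hcb, by rw [map_sub, hgb, hgc]; norm_num⟩
  have h0 : u (c - b) = 0 := Fac.sub_zero h.2.2.1 hc
  have hn1 : c - b ≠ a := by
    intro he
    rw [he, T_one h.2.1] at h0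
    norm_num at h0
  have hn2 : c - b ≠ -a - b := by
    intro he
    rw [he, h.height] at h0
    norm_num at h0
  have h3 := hS.co_le hP hcT hn1 hn2 (mem_T.1 hc).1 hgc
  have h4 : c = (c - b) - a - (-a - b) := by abel
  have h5 : co P g (c - b) c = 1 := by
    calc co P g (c - b) c = co P g (c - b) ((c - b) - a - (-a - b)) := by rw [← h4]
      _ = 1 := by
        rw [map_sub, map_sub _ (c - b), hg.co_self hP.good hcT,
          hg.co_ne hP.good hcT hS.2.1 hn1.symm, hg.co_ne hP.good hcT hS.2.2.1 hn2.symm]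
        norm_num
  linarith

theorem Spec.neg_mem (hP : ZeroSum P) (h : Spec P u a b) : -b ∈ P.verts := by
  have h1 := TSR.add_mem hP.good (mem_T.1 h.2.1).1 h.2.2.2 fun g hg hga => h.not_common hP hg hga
  have h2 : a + (-a - b) = -b := by abel
  rw [h2] at h1
  refine h1.resolve_left fun h3 => ne_zero hP.good (mem_T.1 h.2.2.1).1 (neg_eq_zero.1 h3)

/-- Otherwise the vertex `-a` would be the midpoint of the vertices `b - a` and `-a - b`. -/
theorem Spec.sub_notMem (hP : ZeroSum P) (h : Spec P u a b) : b - a ∉ P.verts := by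
  intro hba
  have h1 := midpoint_eq (h.symm.neg_mem hP) (vert_mem hba) (vert_mem h.2.2.2) (by module)
  apply ne_zero hP.good (mem_T.1 h.2.2.1).1
  have : b = (b - a) - (-a) := by abel
  rw [this, h1, sub_self]

/-- Two steps away from a special vertex `a`: the vertices `a` and `c` of the facet are replaced
by `-a` and `c - a`. -/
theorem Spec.turn (hP : ZeroSum P) (h : Spec P u a b) {c : Fin d → ℝ} (hc : c ∈ T P u)
    (hca : c - a ∈ P.verts) : Fac P (u - co P u a - (co P u a + co P u c)) ∧
      ∀ y, y ∈ T P (u - co P u a - (co P u a + co P u c)) ↔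
        y = -a ∨ y = c - a ∨ (y ∈ T P u ∧ y ≠ a ∧ y ≠ c) := by
  have hf := (h.full hP).1
  have hG := hP.good
  have hu := h.1
  have ha := h.2.1
  obtain ⟨hf1, hT1⟩ := hf.step hG ha hc hca
  have hne := Full.ne hG hca
  have hc1 : c ∈ T P (u - co P u a) := (hT1 c).2 (Or.inr ⟨hc, hne⟩)
  have hco : co P (u - co P u a) c = co P u a + co P u c := by
    refine hf1.co_eq hG hc1 ?_ fun w hw hwc => ?_
    · simp [hu.co_self hG hc, hu.co_ne hG ha hc hne]
    · rcases (hT1 w).1 hw with rfl | ⟨hw, hwa⟩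
      · simp [hu.co_self hG hc, hu.co_ne hG ha hc hne, hu.co_self hG ha,
          hu.co_ne hG hc ha hne.symm]
      · simp [hu.co_ne hG ha hw hwa, hu.co_ne hG hc hw hwc]
  obtain ⟨hf2, hT2⟩ := hf1.step hG hc1 (h.symm.neg_mem hP)
    (by simp [T_one ha, hu.co_self hG ha])
    (by rw [hco]; simp [hu.co_self hG ha, hu.co_ne hG hc ha hne.symm])
  rw [hco] at hf2 hT2
  refine ⟨hf2, fun y => ?_⟩
  rw [hT2, hT1]
  have hcc : c - a ≠ c := by
    intro he
    exact ne_zero hG (mem_T.1 ha).1 (by simpa using he)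
  constructor
  · rintro (h | ⟨h | h, h'⟩) <;> tauto
  · rintro (h | h | h)
    · exact Or.inl h
    · exact Or.inr ⟨Or.inl h, h ▸ hcc⟩
    · tauto

theorem ne_of_map {f : (Fin d → ℝ) →ₗ[ℝ] ℝ} {x y : Fin d → ℝ} (h : f x ≠ f y) : x ≠ y :=
  fun e => h (by rw [e])

/-- If `c - a` is a vertex, `a` being one of the special vertices, so is `a - c`. -/
theorem Spec.back (hP : ZeroSum P) (h : Spec P u a b) {c : Fin d → ℝ} (hc : c ∈ T P u)
    (hca : c - a ∈ P.verts) : a - c ∈ P.verts := by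
  have hG := hP.good
  have hf := (h.full hP).1
  have hu := h.1
  have ha := h.2.1
  have hne := Full.ne hG hca
  obtain ⟨e, he, hec⟩ := hf.exists_phi hG hc
  by_cases hea : e = a
  · rwa [hea] at hec
  exfalso
  have hec' := Full.ne hG hec
  obtain ⟨-, hT⟩ := h.turn hP hc hca
  have h1 : u (e - c) = 0 := Fac.sub_zero hc he
  have h2 : co P u a (e - c) = 0 := by
    rw [map_sub, hu.co_ne hG ha he hea, hu.co_ne hG ha hc hne, sub_self]
  have h3 := hu.co_sub hG hc he hec
  have hm : e - c ∈ T P (u - co P u a - (co P u a + co P u c)) :=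
    mem_T.2 ⟨hec, by simp only [LinearMap.sub_apply, LinearMap.add_apply, h1, h2, h3]; norm_num⟩
  rcases (hT _).1 hm with h4 | h4 | ⟨h4, -⟩
  · rw [h4, map_neg, T_one ha] at h1
    norm_num at h1
  · rw [h4, hu.co_sub hG ha hc hca] at h2
    norm_num at h2
  · rw [T_one h4] at h1
    norm_num at h1

/-- Besides `a` and `a - c`, some further vertex has a positive `a`-coordinate, since the
`a`-coordinates of all vertices sum up to zero. -/
theorem Spec.exists_pos (hP : ZeroSum P) (h : Spec P u a b) {c : Fin d → ℝ} (hc : c ∈ T P u)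
    (hca : c - a ∈ P.verts) (hac : a - c ∈ P.verts) :
    ∃ t ∈ P.verts, t ≠ a ∧ t ≠ a - c ∧ 0 < co P u a t := by
  classical
  have hG := hP.good
  have hu := h.1
  have ha := h.2.1
  have hne := Full.ne hG hca
  have ha1 := T_one ha
  have hc1 := T_one hc
  have hb1 := T_one h.2.2.1
  have fa := hu.co_self hG ha
  have fc := hu.co_ne hG ha hc hne
  have fb := hu.co_ne hG ha h.2.2.1 (h.ne hP).symm
  by_contra! hcon
  have hsub : ({a, c - a, a - c, -a - b, -a} : Finset (Fin d → ℝ)) ⊆ P.verts := by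
    intro x hx
    simp only [Finset.mem_insert, Finset.mem_singleton] at hx
    rcases hx with rfl | rfl | rfl | rfl | rfl
    exacts [(mem_T.1 ha).1, hca, hac, h.2.2.2, h.symm.neg_mem hP]
  have hsum : ∑ x ∈ P.verts, co P u a x = 0 := by
    have := hP.sum
    rw [nu] at this
    rw [← map_sum, this, map_zero]
  rw [← Finset.sum_sdiff hsub] at hsum
  have hneg : ∑ x ∈ P.verts \ {a, c - a, a - c, -a - b, -a}, co P u a x ≤ 0 := by
    refine Finset.sum_nonpos fun x hx => ?_
    simp only [Finset.mem_sdiff, Finset.mem_insert, Finset.mem_singleton, not_or] at hx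
    exact hcon x hx.1 hx.2.1 hx.2.2.2.1
  have hS : ∑ x ∈ ({a, c - a, a - c, -a - b, -a} : Finset (Fin d → ℝ)), co P u a x = -1 := by
    rw [Finset.sum_insert, Finset.sum_insert, Finset.sum_insert, Finset.sum_insert,
      Finset.sum_singleton]
    · simp only [map_sub, map_neg, fa, fb, fc]
      norm_num
    all_goals simp only [Finset.mem_insert, Finset.mem_singleton, not_or]
    · apply ne_of_map (f := u)
      simp only [map_sub, map_neg, ha1, hb1]
      norm_num
    · constructor <;> apply ne_of_map (f := u) <;>
      · simp only [map_sub, map_neg, ha1, hb1, hc1]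
        norm_num
    · refine ⟨?_, ?_, ?_⟩
      · apply ne_of_map (f := co P u a)
        simp only [map_sub, fa, fc]
        norm_num
      all_goals
        apply ne_of_map (f := u)
        simp only [map_sub, map_neg, ha1, hb1, hc1]
        norm_num
    · refine ⟨?_, ?_, ?_, ?_⟩ <;> apply ne_of_map (f := u) <;>
      · simp only [map_sub, map_neg, ha1, hb1, hc1]
        norm_num
  linarith

/-- The facet reached by `Spec.turn` again has a vertex at height `-2`. -/
theorem Spec.exists_low (hP : ZeroSum P) (h : Spec P u a b) {c : Fin d → ℝ} (hc : c ∈ T P u)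
    (hca : c - a ∈ P.verts) (hac : a - c ∈ P.verts) :
    ∃ t ∈ P.verts, co P u a t = 1 ∧
      (u - co P u a - (co P u a + co P u c)) t = -2 := by
  have hG := hP.good
  have hu := h.1
  have hf := (h.full hP).1
  have ha := h.2.1
  have hne := Full.ne hG hca
  have fa := hu.co_self hG ha
  obtain ⟨hGf, -⟩ := h.turn hP hc hca
  obtain ⟨t, ht, hta, htac, hpos⟩ := h.exists_pos hP hc hca hac
  refine ⟨t, ht, ?_⟩
  have hlat := lat_vert hG ht
  have h1 : 1 ≤ co P u a t := by
    simpa using isI_zero.lt (hf.isI_co hG ha hlat) hpos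
  have hge := hP.ge hGf ht
  simp only [LinearMap.sub_apply, LinearMap.add_apply] at hge ⊢
  have hut : u t ≠ 1 := by
    intro hut
    rw [hu.co_ne hG ha (mem_T.2 ⟨ht, hut⟩) hta] at hpos
    exact lt_irrefl _ hpos
  have hle := hu.le_zero hG ht hut
  by_cases h0 : u t = 0
  · obtain ⟨v, hv, w, hw, hwv, rfl⟩ := hf.form hG ht h0
    have hwa : w = a := by
      by_contra hwa
      rw [map_sub, hu.co_ne hG ha hw hwa] at hpos
      have := hu.co_nonneg hG ha hv
      linarith
    subst hwa
    have hvc : v ≠ c := by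
      rintro rfl
      exact htac rfl
    rw [h0, map_sub, map_sub, fa, hu.co_ne hG ha hv hwv.symm, hu.co_ne hG hc hv hvc,
      hu.co_ne hG hc ha hne.symm]
    norm_num
  have hlt := lt_of_le_of_ne hle h0
  have hm1 : u t ≤ -1 := by
    have := (hu.isI hG hlat).lt isI_zero hlt
    linarith
  have hnab : t ≠ -a - b := by
    rintro rfl
    rw [map_sub, map_neg, fa, hu.co_ne hG ha h.2.2.1 (h.ne hP).symm] at hpos
    norm_num at hpos
  have hge1 := (h.full hP).2 t ht hnab
  have hc1 := hf.co_ge hG hc ht hlt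
  constructor <;> linarith

/-- The situation at a facet with a vertex at height `-2` reproduces itself after a turn. -/
theorem Spec.next (hP : ZeroSum P) (h : Spec P u a b) :
    ∃ c k, c ∈ T P u ∧ k ∈ T P u ∧ c - a ∈ P.verts ∧ k ≠ a ∧ k ≠ c ∧
      Spec P (u - co P u a - (co P u a + co P u c)) (c - a) k ∧
      ∃ w ∈ T P u, w ≠ a ∧ w ≠ c ∧ w - k ∈ P.verts := by
  have hG := hP.good
  have hu := h.1
  have hf := (h.full hP).1
  have ha := h.2.1
  obtain ⟨c, hc, hca⟩ := hf.exists_phi hG ha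
  have hac := h.back hP hc hca
  have hne := Full.ne hG hca
  have hcb : c ≠ b := by
    rintro rfl
    exact h.sub_notMem hP hca
  obtain ⟨t, ht, hft, hGt⟩ := h.exists_low hP hc hca hac
  obtain ⟨hGf, hT⟩ := h.turn hP hc hca
  have fa := hu.co_self hG ha
  have fc := hu.co_ne hG ha hc hne
  -- the special vertices of the new facet: exactly one of them is `-a` or `c - a`
  have key : ∃ s k, Spec P (u - co P u a - (co P u a + co P u c)) s k ∧ t = -s - k ∧
      (s = -a ∨ s = c - a) ∧ k ∈ T P u ∧ k ≠ a ∧ k ≠ c := by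
    obtain ⟨s, s', hS, hts⟩ := hP.exists_spec hGf ht (by rw [hGt]; norm_num)
    rw [hts, map_sub, map_neg] at hft
    have hv : ∀ y, y ∈ T P (u - co P u a - (co P u a + co P u c)) →
        ((y = -a ∨ y = c - a) ∧ co P u a y = -1) ∨
          ((y ∈ T P u ∧ y ≠ a ∧ y ≠ c) ∧ co P u a y = 0) := by
      intro y hy
      rcases (hT y).1 hy with rfl | rfl | h1
      · exact Or.inl ⟨Or.inl rfl, by rw [map_neg, fa]⟩
      · exact Or.inl ⟨Or.inr rfl, by rw [map_sub, fa, fc]; norm_num⟩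
      · exact Or.inr ⟨h1, hu.co_ne hG ha h1.1 h1.2.1⟩
    rcases hv s hS.2.1 with ⟨h1, h2⟩ | ⟨h1, h2⟩ <;>
      rcases hv s' hS.2.2.1 with ⟨h3, h4⟩ | ⟨h3, h4⟩
    · rw [h2, h4] at hft
      norm_num at hft
    · exact ⟨s, s', hS, hts, h1, h3⟩
    · exact ⟨s', s, hS.symm, by rw [hts]; abel, h3, h1⟩
    · rw [h2, h4] at hft
      norm_num at hft
  obtain ⟨s, k, hS, hts, hs, hk, hka, hkc⟩ := key
  obtain ⟨w, hw, hwk⟩ := (hS.full hP).1.exists_phi hG hS.2.2.1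
  have hkw := hS.symm.back hP hw hwk
  have hws : w ≠ s := by
    rintro rfl
    exact hS.symm.sub_notMem hP hwk
  have hw' : w ∈ T P u ∧ w ≠ a ∧ w ≠ c := by
    rcases (hT w).1 hw with rfl | rfl | h1
    · exfalso
      have := hu.1 _ hkw
      rw [map_sub, map_neg, T_one ha, T_one hk] at this
      norm_num at this
    · exfalso
      have h1 := h.co_le hP hc hne hcb hwk (by
        rw [map_sub, map_sub, T_one ha, T_one hk, T_one hc]
        norm_num)
      rw [map_sub, map_sub, hu.co_self hG hc, hu.co_ne hG hc ha hne.symm,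
        hu.co_ne hG hc hk hkc] at h1
      norm_num at h1
    · exact h1
  rcases hs with rfl | rfl
  · exfalso
    apply hw'.2.1
    refine hf.unique hG hk ha hw'.1 ?_ hwk
    have : a - k = t := by rw [hts]; abel
    rwa [this]
  · exact ⟨c, k, hc, hk, hca, hka, hkc, hS, w, hw'.1, hw'.2.1, hw'.2.2, hwk⟩

/-- Two consecutive turns contradict the uniqueness of partners over the original facet. -/
theorem Spec.false (hP : ZeroSum P) (h : Spec P u a b) : False := by
  have hG := hP.good
  have hu := h.1
  have hf := (h.full hP).1
  have ha := h.2.1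
  obtain ⟨c, k, hc, hk, hca, hka, hkc, hS, -⟩ := h.next hP
  have hne := Full.ne hG hca
  obtain ⟨-, hT⟩ := h.turn hP hc hca
  obtain ⟨c', k', hc', hk', hca', hka', hkc', hS', w', hw', hwa', hwc', hwk'⟩ := hS.next hP
  have hne' := Full.ne hG hca'
  have hc'a : c' = -a := by
    rcases (hT c').1 hc' with h1 | h1 | ⟨h1, h2, h3⟩
    · exact h1
    · exact absurd h1 hne'
    · exfalso
      have h4 : c' - (c - a) ∈ T P u := mem_T.2 ⟨hca', by
        rw [map_sub, map_sub, T_one h1, T_one hc, T_one ha]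
        norm_num⟩
      have h5 := hu.co_nonneg hG hc h4
      rw [map_sub, map_sub, hu.co_ne hG hc h1 h3, hu.co_self hG hc,
        hu.co_ne hG hc ha hne.symm] at h5
      norm_num at h5
  have hmem : ∀ y, y ∈ T P (u - co P u a - (co P u a + co P u c)) → y ≠ c - a → y ≠ c' →
      y ∈ T P u ∧ y ≠ a ∧ y ≠ c := by
    intro y hy h1 h2
    rcases (hT y).1 hy with h3 | h3 | h3
    · exact absurd (h3.trans hc'a.symm) h2
    · exact absurd h3 h1
    · exact h3
  have hk2 := hmem k' hk' hka' hkc'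
  have hw2 := hmem w' hw' hwa' hwc'
  have hck : c - k' ∈ P.verts := by
    have h1 := hS'.2.2.2
    have h2 : -(c' - (c - a)) - k' = c - k' := by rw [hc'a]; abel
    rwa [h2] at h1
  exact hw2.2.2 (hf.unique hG hk2.1 hc hw2.1 hck hwk')

/-- If the vertices sum up to zero, the vertex set is centrally symmetric, so `d` is odd. -/
theorem ZeroSum.false (hP : ZeroSum P) (hd : Even d) : False := by
  classical
  have hG := hP.good
  have hneg : ∀ x ∈ P.verts, -x ∈ P.verts := by
    intro x hx
    refine (lat_mem hG (lat_neg (lat_vert hG hx)) fun g hg => ?_).resolve_left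
      (neg_ne_zero.2 (ne_zero hG hx))
    by_contra! h1
    obtain ⟨a, b, hS, -⟩ := hP.exists_spec hg hx (by rw [map_neg] at h1; linarith)
    exact hS.false hP
  have h1 : ∑ x ∈ P.verts, (1 : ZMod 2) = 0 := by
    refine Finset.sum_involution (fun x _ => -x) (fun _ _ => by decide) (fun x hx _ he => ?_)
      (fun x hx => hneg x hx) (fun x _ => neg_neg x)
    exact ne_zero hG hx (self_eq_neg.1 he.symm)
  rw [Finset.sum_const, nsmul_eq_mul, mul_one, ZMod.natCast_eq_zero_iff] at h1
  have hc := hP.card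
  obtain ⟨m, hm⟩ := hd
  omega

/-! ### Vertices summing up to a vertex -/

/-- The hypotheses in the case where the vertices sum up to a vertex `a`. -/
structure OneSum (P : Polytope d) (a : Fin d → ℝ) : Prop where
  good : Good P
  card : (P.verts.card : ℤ) = 3 * d - 1
  mem : a ∈ P.verts
  sum : nu P = a

/-- The sum of all vertices lies in the cone over some facet; if it is not zero, the counting
argument shows that it has height `1`, so it is a vertex. -/
theorem exists_oneSum (hd : Even d) (hG : Good P) (hc : (P.verts.card : ℤ) = 3 * d - 1) :
    ∃ a, OneSum P a := by
  classical
  obtain ⟨u, hu, hco⟩ := exists_special hG (nu P)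
  have hlat : IsLatticePt (nu P) := lat_sum fun v hv => lat_vert hG hv
  have hsum := hu.eq_sum_co hG (nu P)
  have h0 : 0 ≤ u (nu P) := hsum ▸ Finset.sum_nonneg hco
  rcases h0.eq_or_lt with h0 | h0
  · have hz : nu P = 0 := by
      have := hu.eq_zero_of_nonpos hG (x := -nu P)
        (fun v hv => by simpa using hco v hv) (by rw [map_neg, ← h0, neg_zero])
      simpa using this
    exact (ZeroSum.false ⟨hG, hc, hz⟩ hd).elim
  · have h1 : 1 ≤ u (nu P) := by simpa using isI_zero.lt (hu.isI hG hlat) h0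
    obtain ⟨hf, h2, -⟩ := hu.full_of_one_le hG hc h1
    -- nonnegative integers summing up to `1`: exactly one of them is nonzero
    rw [hsum] at h2
    obtain ⟨a, ha, hpos⟩ : ∃ a ∈ T P u, 0 < co P u a (nu P) := by
      by_contra! hcon
      have := Finset.sum_nonpos hcon
      linarith
    have ha1 : 1 ≤ co P u a (nu P) := by simpa using isI_zero.lt (hf.isI_co hG ha hlat) hpos
    refine ⟨a, hG, hc, (mem_T.1 ha).1, ?_⟩
    rw [← sub_eq_zero]
    refine hu.eq_zero_of_nonpos hG (fun v hv => ?_) (by rw [map_sub, T_one ha, hsum, h2, sub_self])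
    rw [map_sub]
    by_cases hva : v = a
    · subst hva
      have := Finset.single_le_sum hco hv
      rw [h2] at this
      rw [hu.co_self hG hv]
      linarith
    · rw [← Finset.add_sum_erase _ _ ha] at h2
      have : co P u v (nu P) ≤ ∑ x ∈ (T P u).erase a, co P u x (nu P) :=
        Finset.single_le_sum (f := fun x => co P u x (nu P))
          (fun x hx => hco x (Finset.mem_of_mem_erase hx)) (Finset.mem_erase.2 ⟨hva, hv⟩)
      rw [hu.co_ne hG hv ha (Ne.symm hva)]
      linarith

theorem OneSum.full (hP : OneSum P a) (hu : Fac P u) (ha : a ∈ T P u) :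
    Full P u ∧ ∀ x ∈ P.verts, -1 ≤ u x := by
  have := hu.full_of_one_le hP.good hP.card (by rw [hP.sum, T_one ha])
  exact ⟨this.1, this.2.2⟩

/-- Crossing the ridge opposite to a vertex `i ≠ a` does not leave the facets through `a`. -/
theorem OneSum.step (hP : OneSum P a) (hu : Fac P u) (ha : a ∈ T P u) {i j : Fin d → ℝ}
    (hi : i ∈ T P u) (hia : i ≠ a) (hj : j ∈ T P u) (hji : j - i ∈ P.verts) :
    Fac P (u - co P u i) ∧ a ∈ T P (u - co P u i) ∧
      ∀ y, y ∈ T P (u - co P u i) ↔ y = j - i ∨ (y ∈ T P u ∧ y ≠ i) := by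
  obtain ⟨h1, h2⟩ := (hP.full hu ha).1.step hP.good hi hj hji
  exact ⟨h1, (h2 a).2 (Or.inr ⟨ha, hia.symm⟩), h2⟩

theorem OneSum.co_le (hP : OneSum P a) (hu : Fac P u) (ha : a ∈ T P u) {v x : Fin d → ℝ}
    (hv : v ∈ T P u) (hva : v ≠ a) (hx : x ∈ P.verts) (hx1 : u x = -1) : co P u v x ≤ 0 := by
  obtain ⟨j, hj, hji⟩ := (hP.full hu ha).1.exists_phi hP.good hv
  obtain ⟨h1, h2, -⟩ := hP.step hu ha hv hva hj hji
  have := (hP.full h1 h2).2 x hx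
  rw [LinearMap.sub_apply] at this
  linarith

/-- A vertex at height `-1` with `i`-coordinate `-1` has height `0` over the neighboring facet
across `i`, and therefore is a difference of two vertices of that facet. -/
theorem OneSum.eq_sub_sub (hP : OneSum P a) (hu : Fac P u) (ha : a ∈ T P u)
    {i j x : Fin d → ℝ} (hi : i ∈ T P u) (hia : i ≠ a) (hj : j ∈ T P u) (hji : j - i ∈ P.verts)
    (hx : x ∈ P.verts) (hx1 : u x = -1) (hco : co P u i x = -1) :
    ∃ w ∈ T P u, w ≠ i ∧ x = j - i - w ∧ (w = j ∨ j = a) := by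
  have hG := hP.good
  obtain ⟨h1, h2, hT⟩ := hP.step hu ha hi hia hj hji
  have hcj := hu.co_sub hG hi hj hji
  obtain ⟨v, hv, w, hw, hwv, rfl⟩ := (hP.full h1 h2).1.form hG hx (by
    rw [LinearMap.sub_apply, hx1, hco, sub_self])
  rcases (hT w).1 hw with rfl | ⟨hw, hwi⟩ <;> rcases (hT v).1 hv with rfl | ⟨hv, hvi⟩
  · exact absurd rfl hwv
  · refine ⟨v, hv, hvi, rfl, ?_⟩
    by_contra! hcon
    have h3 := hP.co_le hu ha hj hcon.2 hx hx1
    rw [map_sub, map_sub, hu.co_self hG hj, hu.co_ne hG hj hi (Full.ne hG hji).symm,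
      hu.co_ne hG hj hv hcon.1] at h3
    norm_num at h3
  · rw [map_sub, hcj, hu.co_ne hG hi hw hwi] at hco
    norm_num at hco
  · rw [map_sub, hu.co_ne hG hi hw hwi, hu.co_ne hG hi hv hvi] at hco
    norm_num at hco

/-- The vertices at height `-1` below a facet through `a` are negatives of vertices of the
facet. -/
theorem OneSum.eq_neg (hP : OneSum P a) (hu : Fac P u) (ha : a ∈ T P u) {x : Fin d → ℝ}
    (hx : x ∈ P.verts) (hx1 : u x = -1) : ∃ v ∈ T P u, x = -v := by
  have hG := hP.good
  have hf := (hP.full hu ha).1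
  by_cases hax : co P u a x ≤ 0
  · refine hf.eq_neg hG (lat_vert hG hx) hx1 fun v hv => ?_
    by_cases hva : v = a
    · rwa [hva]
    · exact hP.co_le hu ha hv hva hx hx1
  obtain ⟨i, hi, hix⟩ := hf.exists_le hG (lat_vert hG hx) (by rw [hx1]; norm_num)
  have hia : i ≠ a := by
    rintro rfl
    exact hax (by linarith)
  have hix1 : co P u i x = -1 := by
    have := hf.co_ge hG hi hx (by rw [hx1]; norm_num)
    linarith
  obtain ⟨j, hj, hji⟩ := hf.exists_phi hG hi
  obtain ⟨w, hw, hwi, hxw, h1⟩ := hP.eq_sub_sub hu ha hi hia hj hji hx hx1 hix1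
  by_cases hwj : w = j
  · exact ⟨i, hi, by rw [hxw, hwj]; abel⟩
  obtain rfl := h1.resolve_left hwj
  obtain ⟨k, hk, hkw⟩ := hf.exists_phi hG hw
  obtain ⟨w', hw', -, hxw', h2⟩ := hP.eq_sub_sub hu ha hw hwj hk hkw hx hx1 (by
    rw [hxw, map_sub, map_sub, hu.co_self hG hw, hu.co_ne hG hw hi hwi.symm,
      hu.co_ne hG hw hj (Ne.symm hwj)]
    norm_num)
  rcases h2 with rfl | rfl
  · exact ⟨w, hw, by rw [hxw']; abel⟩
  exfalso
  obtain ⟨hf', ha', hT⟩ := hP.step hu hk hi hia hk hji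
  have h3 := (hP.full hf' ha').1.unique hG ((hT w).2 (Or.inr ⟨hw, hwi⟩)) ha'
    ((hT _).2 (Or.inl rfl)) hkw (hxw ▸ hx)
  exact ne_zero hG (mem_T.1 hi).1 (by simpa using h3)

/-- The partner relation is symmetric away from `a`: over the neighboring facet across `i` the
vertex `i - k` has height `-1`, so it is the negative of the new vertex `j - i`. -/
theorem OneSum.phi_symm (hP : OneSum P a) (hu : Fac P u) (ha : a ∈ T P u) {i j k : Fin d → ℝ}
    (hi : i ∈ T P u) (hia : i ≠ a) (hj : j ∈ T P u) (hji : j - i ∈ P.verts)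
    (hk : k ∈ T P u) (hik : i - k ∈ P.verts) : k = j := by
  have hG := hP.good
  obtain ⟨hf', ha', hT⟩ := hP.step hu ha hi hia hj hji
  obtain ⟨w, hw, h1⟩ := hP.eq_neg hf' ha' hik (by
    rw [LinearMap.sub_apply, Fac.sub_zero hk hi, map_sub, hu.co_self hG hi,
      hu.co_ne hG hi hk (Full.ne hG hik).symm]
    norm_num)
  rcases (hT w).1 hw with rfl | ⟨hw, -⟩
  · rw [neg_sub] at h1
    exact sub_right_injective h1
  · have h2 : u (i - k) = 0 := Fac.sub_zero hk hi
    rw [h1, map_neg, T_one hw] at h2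
    norm_num at h2

/-- Antipodal pairs of vertices do not contribute to the sum of all vertices. -/
theorem sum_filter_neg [DecidableEq (Fin d → ℝ)] (hG : Good P) :
    ∑ x ∈ P.verts.filter (fun x => -x ∉ P.verts), x = nu P := by
  have h1 : ∑ x ∈ P.verts.filter (fun x => -x ∈ P.verts), x = 0 := by
    refine Finset.sum_involution (fun x _ => -x) (fun x _ => add_neg_cancel x)
      (fun x hx _ he => ?_) (fun x hx => ?_) (fun x _ => neg_neg x)
    · exact ne_zero hG (Finset.mem_filter.1 hx).1 (self_eq_neg.1 he.symm)
    · rw [Finset.mem_filter] at hx ⊢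
      exact ⟨hx.2, by rw [neg_neg]; exact hx.1⟩
  rw [nu, ← Finset.sum_filter_add_sum_filter_not P.verts (fun x => -x ∈ P.verts), h1, zero_add]

theorem even_card_of_involution {α : Type*} (s : Finset α) (f : α → α)
    (hf : ∀ x ∈ s, f x ∈ s ∧ f x ≠ x ∧ f (f x) = x) : Even s.card := by
  have h1 : ∑ x ∈ s, (1 : ZMod 2) = 0 :=
    Finset.sum_involution (fun x _ => f x) (fun _ _ => by decide) (fun x hx _ => (hf x hx).2.1)
      (fun x hx => (hf x hx).1) (fun x hx => (hf x hx).2.2)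
  rw [Finset.sum_const, nsmul_eq_mul, mul_one, ZMod.natCast_eq_zero_iff] at h1
  exact even_iff_two_dvd.2 h1

/-- The vertex set of `P`, in terms of a facet through `a` and a fixed-point-free involution of
its vertices. -/
theorem OneSum.description (hd : Even d) (hP : OneSum P a) (hu : Fac P u) (ha : a ∈ T P u) :
    ∃ φ : (Fin d → ℝ) → (Fin d → ℝ),
      (∀ v ∈ T P u, φ v ∈ T P u ∧ φ v ≠ v ∧ φ (φ v) = v) ∧
      ∀ x, x ∈ P.verts ↔ x ∈ T P u ∨ (∃ v ∈ T P u, x = φ v - v) ∨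
        (∃ v ∈ T P u, v ≠ a ∧ x = -v) := by
  classical
  have hG := hP.good
  have hf := (hP.full hu ha).1
  have hex : ∀ v, ∃ w, v ∈ T P u → w ∈ T P u ∧ w - v ∈ P.verts := by
    intro v
    by_cases hv : v ∈ T P u
    · obtain ⟨w, hw⟩ := hf.exists_phi hG hv
      exact ⟨w, fun _ => hw⟩
    · exact ⟨0, fun h => absurd h hv⟩
  choose φ hφ using hex
  have hφne : ∀ v ∈ T P u, φ v ≠ v := fun v hv => Full.ne hG (hφ v hv).2
  have hinv : ∀ v ∈ T P u, φ v ≠ a → φ (φ v) = v := fun v hv hva =>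
    (hP.phi_symm hu ha (hφ v hv).1 hva (hφ _ (hφ v hv).1).1 (hφ _ (hφ v hv).1).2 hv
      (hφ v hv).2).symm
  have hja := hinv a ha (hφne a ha)
  have h0 : ∀ x ∈ P.verts, u x = 0 → ∃ v ∈ T P u, x = φ v - v := by
    intro x hx hx0
    obtain ⟨v, hv, hneg⟩ := hu.exists_neg hG (ne_zero hG hx) hx0
    exact ⟨v, hv, hf.eq_sub hG hv (hφ v hv).1 (hφ v hv).2 hx hx0 hneg⟩
  have hform : ∀ x ∈ P.verts, x ∈ T P u ∨ (∃ v ∈ T P u, x = φ v - v) ∨ (∃ v ∈ T P u, x = -v) := by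
    intro x hx
    by_cases h1 : u x = 1
    · exact Or.inl (mem_T.2 ⟨hx, h1⟩)
    have hle := hu.le_zero hG hx h1
    by_cases h2 : u x = 0
    · exact Or.inr (Or.inl (h0 x hx h2))
    have h3 := (hu.isI hG (lat_vert hG hx)).lt isI_zero (lt_of_le_of_ne hle h2)
    have h4 := (hP.full hu ha).2 x hx
    exact Or.inr (Or.inr (hP.eq_neg hu ha hx (by linarith)))
  have hsum := sum_filter_neg hG
  rw [hP.sum] at hsum
  -- vertices without antipode lie on the facet, or are `a - k` with `φ k = a`, `k ≠ φ a`
  have hnoneg : ∀ x ∈ P.verts, -x ∉ P.verts → x ∈ T P u ∨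
      ∃ k ∈ T P u, φ k = a ∧ k ≠ φ a ∧ x = a - k := by
    intro x hx hnx
    rcases hform x hx with h1 | ⟨v, hv, rfl⟩ | ⟨v, hv, rfl⟩
    · exact Or.inl h1
    · right
      have h2 : φ (φ v) ≠ v := by
        intro h2
        have := (hφ _ (hφ v hv).1).2
        rw [h2] at this
        exact hnx (by rwa [neg_sub])
      have h3 : φ v = a := by
        by_contra h3
        exact h2 (hinv v hv h3)
      exact ⟨v, hv, h3, fun h4 => h2 (by rw [h3, ← h4]), by rw [h3]⟩
    · exact absurd (by rw [neg_neg]; exact (mem_T.1 hv).1) hnx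
  have hK : ∀ k ∈ T P u, φ k = a → k ≠ φ a → a - k ∈ P.verts ∧ -(a - k) ∉ P.verts := by
    intro k hk hka hkj
    refine ⟨hka ▸ (hφ k hk).2, fun h1 => hkj ?_⟩
    rw [neg_sub] at h1
    exact hf.unique hG ha (hφ a ha).1 hk (hφ a ha).2 h1
  -- there is at most one such `k`: compare `a`-coordinates in the sum of all vertices
  have hK1 : ∀ k ∈ T P u, φ k = a → k ≠ φ a → ∀ l ∈ T P u, φ l = a → l ≠ φ a → k = l := by
    intro k hk hka hkj l hl hla hlj
    by_contra hkl
    have hs : co P u a a = ∑ x ∈ P.verts.filter (fun x => -x ∉ P.verts), co P u a x := by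
      rw [← map_sum, hsum]
    have hcoa : ∀ k ∈ T P u, φ k = a → co P u a (a - k) = 1 := by
      intro k hk hka
      rw [map_sub, hu.co_self hG ha, hu.co_ne hG ha hk (fun h => hφne k hk (by rw [hka, h])),
        sub_zero]
    have h2 : ∑ x ∈ ({a - k, a - l} : Finset (Fin d → ℝ)), co P u a x ≤
        ∑ x ∈ P.verts.filter (fun x => -x ∉ P.verts), co P u a x := by
      refine Finset.sum_le_sum_of_subset_of_nonneg (fun x hx => ?_) fun x hx _ => ?_
      · rw [Finset.mem_filter]
        simp only [Finset.mem_insert, Finset.mem_singleton] at hx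
        rcases hx with rfl | rfl
        exacts [hK k hk hka hkj, hK l hl hla hlj]
      · rw [Finset.mem_filter] at hx
        rcases hnoneg x hx.1 hx.2 with h3 | ⟨m, hm, hma, -, rfl⟩
        · exact hu.co_nonneg hG ha h3
        · rw [hcoa m hm hma]
          exact zero_le_one
    rw [Finset.sum_pair (fun h => hkl (sub_right_injective h)), hcoa k hk hka, hcoa l hl hla, ← hs,
      hu.co_self hG ha] at h2
    norm_num at h2
  -- parity excludes a single such `k`
  have hK0 : ∀ k ∈ T P u, φ k = a → k = φ a := by
    intro k hk hka
    by_contra hkj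
    have hak : k ≠ a := fun h => hφne k hk (by rw [hka, h])
    have h1 : Even ((T P u).erase k).card := by
      refine even_card_of_involution _ φ fun v hv => ?_
      rw [Finset.mem_erase] at hv
      refine ⟨Finset.mem_erase.2 ⟨fun h2 => ?_, (hφ v hv.2).1⟩, hφne v hv.2, ?_⟩
      · have h3 := hinv v hv.2 (h2 ▸ hak)
        rw [h2, hka] at h3
        exact hkj (by rw [h3, h2])
      · by_cases h2 : φ v = a
        · have h3 : v = φ a := by
            by_contra h3
            exact hv.1 (hK1 v hv.2 h2 h3 k hk hka hkj)
          rw [h2, ← h3]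
        · exact hinv v hv.2 h2
    rw [Finset.card_erase_of_mem hk, hu.card_T hG] at h1
    have := hG.pos
    obtain ⟨m, hm⟩ := hd
    obtain ⟨n, hn⟩ := h1
    omega
  -- hence `a` is the only vertex without antipode
  have hanti : ∀ v ∈ P.verts, -v ∉ P.verts ↔ v = a := by
    have hT : ∀ v ∈ P.verts, -v ∉ P.verts → v ∈ T P u := by
      intro v hv hnv
      rcases hnoneg v hv hnv with h1 | ⟨k, hk, hka, hkj, -⟩
      · exact h1
      · exact absurd (hK0 k hk hka) hkj
    have h1 : ∀ v ∈ P.verts, -v ∉ P.verts → v = a := by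
      intro v hv hnv
      by_contra hva
      have hs : co P u v a = ∑ x ∈ P.verts.filter (fun x => -x ∉ P.verts), co P u v x := by
        rw [← map_sum, hsum]
      rw [hu.co_ne hG (hT v hv hnv) ha (Ne.symm hva)] at hs
      have h2 : co P u v v ≤ ∑ x ∈ P.verts.filter (fun x => -x ∉ P.verts), co P u v x := by
        refine Finset.single_le_sum (f := fun x => co P u v x) (fun x hx => ?_)
          (Finset.mem_filter.2 ⟨hv, hnv⟩)
        rw [Finset.mem_filter] at hx
        exact hu.co_nonneg hG (hT v hv hnv) (hT x hx.1 hx.2)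
      rw [← hs, hu.co_self hG (hT v hv hnv)] at h2
      norm_num at h2
    intro v hv
    refine ⟨h1 v hv, ?_⟩
    rintro rfl hnv
    have h2 : P.verts.filter (fun x => -x ∉ P.verts) = ∅ := by
      refine Finset.filter_eq_empty_iff.2 fun x hx hnx => ?_
      rw [h1 x hx hnx] at hnx
      exact hnx hnv
    rw [h2, Finset.sum_empty] at hsum
    exact ne_zero hG hv hsum.symm
  refine ⟨φ, fun v hv => ⟨(hφ v hv).1, hφne v hv, ?_⟩, fun x => ⟨fun hx => ?_, ?_⟩⟩
  · by_cases h1 : φ v = a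
    · rw [h1, ← hK0 v hv h1]
    · exact hinv v hv h1
  · rcases hform x hx with h1 | h1 | ⟨v, hv, rfl⟩
    · exact Or.inl h1
    · exact Or.inr (Or.inl h1)
    · refine Or.inr (Or.inr ⟨v, hv, fun h1 => ?_, rfl⟩)
      exact (hanti v (mem_T.1 hv).1).2 h1 hx
  · rintro (h1 | ⟨v, hv, rfl⟩ | ⟨v, hv, hva, rfl⟩)
    · exact (mem_T.1 h1).1
    · exact (hφ v hv).2
    · by_contra h1
      exact hva ((hanti v (mem_T.1 hv).1).1 h1)

/-! ### The isomorphism -/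

/-- A finite set with a fixed-point-free involution `f` can be listed as
`a, f a, a', f a', …`, starting at any of its elements `a`. -/
theorem exists_enum {α : Type*} [DecidableEq α] (f : α → α) : ∀ (n : ℕ) (s : Finset α) (a : α),
    s.card = 2 * n → (a ∈ s ∨ n = 0) → (∀ x ∈ s, f x ∈ s ∧ f x ≠ x ∧ f (f x) = x) →
    ∃ e : ℕ → α, e 0 = a ∧ (∀ i < 2 * n, e i ∈ s) ∧
      (∀ i < 2 * n, ∀ j < 2 * n, e i = e j → i = j) ∧
      ∀ i < n, f (e (2 * i)) = e (2 * i + 1) := by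
  intro n
  induction n with
  | zero => exact fun s a _ _ _ => ⟨fun _ => a, rfl, by simp, by simp, by simp⟩
  | succ n ih =>
    intro s a hs ha hf
    replace ha : a ∈ s := by simpa using ha
    obtain ⟨h1, h2, h3⟩ := hf a ha
    have hs' : ((s.erase a).erase (f a)).card = 2 * n := by
      rw [Finset.card_erase_of_mem (Finset.mem_erase.2 ⟨h2, h1⟩), Finset.card_erase_of_mem ha, hs]
      omega
    have hmem : ∀ x, x ∈ (s.erase a).erase (f a) ↔ x ≠ f a ∧ x ≠ a ∧ x ∈ s := by
      intro x
      rw [Finset.mem_erase, Finset.mem_erase]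
    obtain ⟨a', ha'⟩ : ∃ a', a' ∈ (s.erase a).erase (f a) ∨ n = 0 := by
      by_cases hn : n = 0
      · exact ⟨a, Or.inr hn⟩
      · obtain ⟨a', h⟩ := Finset.card_pos.1 (by omega : 0 < ((s.erase a).erase (f a)).card)
        exact ⟨a', Or.inl h⟩
    obtain ⟨e, -, he, hinj, hfe⟩ := ih _ a' hs' ha' fun x hx => by
      obtain ⟨hx1, hx2, hx3⟩ := (hmem x).1 hx
      obtain ⟨h4, h5, h6⟩ := hf x hx3
      refine ⟨(hmem _).2 ⟨fun h => hx2 ?_, fun h => hx1 ?_, h4⟩, h5, h6⟩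
      · rw [← h6, h, h3]
      · rw [← h6, h]
    refine ⟨fun i => if i = 0 then a else if i = 1 then f a else e (i - 2), by simp,
      fun i hi => ?_, fun i hi j hj hij => ?_, fun i hi => ?_⟩
    · dsimp only
      split_ifs with h4 h5
      · exact ha
      · exact h1
      · exact ((hmem _).1 (he (i - 2) (by omega))).2.2
    · have he' : ∀ i, i < 2 * (n + 1) → i ≠ 0 → i ≠ 1 → e (i - 2) ≠ f a ∧ e (i - 2) ≠ a :=
        fun i hi h4 h5 =>
          ⟨((hmem _).1 (he (i - 2) (by omega))).1, ((hmem _).1 (he (i - 2) (by omega))).2.1⟩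
      dsimp only at hij
      split_ifs at hij with h4 h5 h6 h7 h8 h9 h10 h11
      · omega
      · exact absurd hij.symm h2
      · exact absurd hij.symm (he' j hj h5 h6).2
      · exact absurd hij h2
      · omega
      · exact absurd hij.symm (he' j hj h8 h9).1
      · exact absurd hij (he' i hi h4 h7).2
      · exact absurd hij (he' i hi h4 h7).1
      · have := hinj _ (by omega) _ (by omega) hij
        omega
    · rcases i with _ | i
      · simp
      · have h4 := hfe i (by omega)
        have h5 : 2 * (i + 1) - 2 = 2 * i := by omega
        have h6 : 2 * (i + 1) + 1 - 2 = 2 * i + 1 := by omega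
        have h7 : 2 * (i + 1) ≠ 0 := by omega
        have h8 : 2 * (i + 1) ≠ 1 := by omega
        have h9 : 2 * (i + 1) + 1 ≠ 0 := by omega
        have h10 : 2 * (i + 1) + 1 ≠ 1 := by omega
        simp only [h5, h6, h7, h8, h9, h10, if_false]
        exact h4

/-- The vertices of a full facet, in any order, define lattice-preserving coordinates. -/
theorem Full.exists_equiv (hG : Good P) (hu : Full P u) (e : Fin d → Fin d → ℝ)
    (he : ∀ i, e i ∈ T P u) (hinj : Function.Injective e) :
    ∃ ψ : (Fin d → ℝ) ≃ₗ[ℝ] (Fin d → ℝ), (∀ i, ψ (e i) = stdVec i) ∧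
      ∀ x, IsLatticePt (ψ x) ↔ IsLatticePt x := by
  have : Nonempty (Fin d) := ⟨⟨0, hG.pos⟩⟩
  have hli : LinearIndependent ℝ e :=
    (hu.1.linInd hG).comp (fun i => (⟨e i, he i⟩ : T P u)) fun i j h =>
      hinj (congrArg Subtype.val h)
  let B := basisOfLinearIndependentOfCardEqFinrank hli (by simp)
  have hB : ∀ i, B i = e i := fun i => by
    simp only [B, coe_basisOfLinearIndependentOfCardEqFinrank]
  have h1 : ∀ i, B.equivFun (e i) = stdVec i := by
    intro i
    ext j
    rw [← hB, Module.Basis.equivFun_self, stdVec, Pi.single_apply]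
    simp only [eq_comm]
  refine ⟨B.equivFun, h1, fun x => ⟨fun h => ?_, fun h i => ?_⟩⟩
  · rw [← B.sum_equivFun x]
    refine lat_sum fun i _ j => ?_
    rw [hB]
    exact IsI.mul (h i) (T_lat hG (he i) j)
  · have h2 : co P u (e i) = B.coord i := by
      have hbij : ∀ w ∈ T P u, ∃ j, e j = w := by
        intro w hw
        have h3 := Finset.surj_on_of_inj_on_of_card_le (s := Finset.univ) (t := T P u)
          (fun i _ => e i) (fun i _ => he i) (fun i j _ _ h => hinj h)
          (by rw [hu.1.card_T hG]; simp) w hw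
        obtain ⟨j, -, hj⟩ := h3
        exact ⟨j, hj.symm⟩
      refine hu.1.co_eq hG (he i) ?_ fun w hw hne => ?_
      · rw [← hB]
        simp
      · obtain ⟨j, rfl⟩ := hbij w hw
        have hji : j ≠ i := fun h => hne (by rw [h])
        rw [← hB, Module.Basis.coord_apply, Module.Basis.repr_self, Finsupp.single_apply,
          if_neg hji]
    have h3 := hu.isI_co hG (he i) h
    rw [h2] at h3
    exact h3

theorem OneSum.exists_iso (hd : Even d) (hP : OneSum P a) :
    ∃ φ : (Fin d → ℝ) ≃ₗ[ℝ] (Fin d → ℝ),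
      (∀ x, IsLatticePt (φ x) ↔ IsLatticePt x) ∧
      φ '' P.carrier = convexHull ℝ (evenTargetVerts d) := by
  classical
  have hG := hP.good
  obtain ⟨u, hu, hua⟩ := exists_fac_mem hG hP.mem
  have ha : a ∈ T P u := mem_T.2 ⟨hP.mem, hua⟩
  obtain ⟨φ, hφ, hV⟩ := hP.description hd hu ha
  obtain ⟨n, hn⟩ := hd
  obtain ⟨e', he0, heT, hinj, heφ⟩ := exists_enum φ n (T P u) a (by rw [hu.card_T hG]; omega)
    (Or.inl ha) hφ
  obtain ⟨ψ, hψ, hlat⟩ := (hP.full hu ha).1.exists_equiv hG (fun i : Fin d => e' i)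
    (fun i => heT i (by omega)) (fun i j h => Fin.ext (hinj i (by omega) j (by omega) h))
  have hsurj : ∀ w ∈ T P u, ∃ j : Fin d, e' j = w := by
    intro w hw
    obtain ⟨j, -, hj⟩ := Finset.surj_on_of_inj_on_of_card_le (s := Finset.univ) (t := T P u)
      (fun (i : Fin d) _ => e' i) (fun i _ => heT i (by omega))
      (fun i j _ _ h => Fin.ext (hinj i (by omega) j (by omega) h))
      (by rw [hu.card_T hG]; simp) w hw
    exact ⟨j, hj.symm⟩
  have hpair : ∀ i j : Fin d, (i : ℕ) % 2 = 0 → (j : ℕ) = i + 1 →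
      φ (e' i) = e' j ∧ φ (e' j) = e' i := by
    intro i j hi hj
    have h1 := heφ (i / 2) (by omega)
    have h2 : 2 * ((i : ℕ) / 2) = i := by omega
    rw [h2] at h1
    rw [hj]
    exact ⟨h1, by rw [← h1]; exact (hφ _ (heT i (by omega))).2.2⟩
  have hzero : ∀ i : Fin d, e' i = a ↔ (i : ℕ) = 0 := by
    intro i
    have hi := i.2
    refine ⟨fun h => hinj i (by omega) 0 (by omega) (h.trans he0.symm), fun h => ?_⟩
    rw [h, he0]
  have himg : ψ '' (P.verts : Set (Fin d → ℝ)) = evenTargetVerts d := by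
    ext y
    constructor
    · rintro ⟨x, hx, rfl⟩
      rcases (hV x).1 hx with h1 | ⟨v, hv, rfl⟩ | ⟨v, hv, hva, rfl⟩
      · obtain ⟨i, rfl⟩ := hsurj x h1
        by_cases hi : (i : ℕ) = 0
        · exact Or.inl ⟨i, hi, hψ i⟩
        · exact Or.inr (Or.inl ⟨i, by omega, Or.inl (hψ i)⟩)
      · obtain ⟨i, rfl⟩ := hsurj v hv
        refine Or.inr (Or.inr ?_)
        rcases Nat.mod_two_eq_zero_or_one i with hi | hi
        · have hlt : (i : ℕ) + 1 < d := by omega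
          refine ⟨i, ⟨i + 1, hlt⟩, hi, rfl, Or.inr ?_⟩
          rw [(hpair i ⟨i + 1, hlt⟩ hi rfl).1, map_sub, hψ, hψ]
        · have h0 : ((⟨i - 1, by omega⟩ : Fin d) : ℕ) % 2 = 0 := by
            simp only
            omega
          have h2 : (i : ℕ) = ((⟨i - 1, by omega⟩ : Fin d) : ℕ) + 1 := by
            simp only
            omega
          refine ⟨⟨i - 1, by omega⟩, i, h0, h2, Or.inl ?_⟩
          rw [(hpair _ i h0 h2).2, map_sub, hψ, hψ]
      · obtain ⟨i, rfl⟩ := hsurj v hv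
        have := mt (hzero i).2 hva
        exact Or.inr (Or.inl ⟨i, by omega, Or.inr (by rw [map_neg, hψ])⟩)
    · rintro (⟨i, -, rfl⟩ | ⟨i, hi, rfl | rfl⟩ | ⟨i, j, hi, hj, rfl | rfl⟩)
      · exact ⟨e' i, (hV _).2 (Or.inl (heT i (by omega))), hψ i⟩
      · exact ⟨e' i, (hV _).2 (Or.inl (heT i (by omega))), hψ i⟩
      · refine ⟨-e' i, (hV _).2 (Or.inr (Or.inr ⟨_, heT i (by omega), fun h => ?_, rfl⟩)), ?_⟩
        · have := (hzero i).1 h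
          omega
        · rw [map_neg, hψ]
      · refine ⟨φ (e' j) - e' j, (hV _).2 (Or.inr (Or.inl ⟨_, heT j (by omega), rfl⟩)), ?_⟩
        rw [(hpair i j hi hj).2, map_sub, hψ, hψ]
      · refine ⟨φ (e' i) - e' i, (hV _).2 (Or.inr (Or.inl ⟨_, heT i (by omega), rfl⟩)), ?_⟩
        rw [(hpair i j hi hj).1, map_sub, hψ, hψ]
  refine ⟨ψ, hlat, ?_⟩
  rw [← himg, Polytope.carrier]
  exact ψ.toLinearMap.image_convexHull _

end TSR

/-- A terminal simplicial reflexive `d`-polytope with `3d - 1` vertices, `d` even,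
is isomorphic as a lattice polytope to the convex hull of
`e_1, ±e_2, …, ±e_d, ±(e_1-e_2), ±(e_3-e_4), …, ±(e_{d-1}-e_d)`. -/
theorem terminal_simplicial_reflexive_3d_sub_one_even {d : ℕ} (hd : Even d)
    (P : Polytope d) (hrefl : P.IsReflexive) (hsimp : P.IsSimplicial)
    (hterm : P.IsTerminal) (hcard : (P.verts.card : ℤ) = 3 * d - 1) :
    ∃ φ : (Fin d → ℝ) ≃ₗ[ℝ] (Fin d → ℝ),
      (∀ x, IsLatticePt (φ x) ↔ IsLatticePt x) ∧
      φ '' P.carrier = convexHull ℝ (evenTargetVerts d) := by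
  have hd0 : 0 < d := by
    -- for `d = 0` the number of vertices would be `-1`
    rcases Nat.eq_zero_or_pos d with rfl | h
    · simp only [Nat.cast_zero] at hcard
      omega
    · exact h
  obtain ⟨a, ha⟩ := TSR.exists_oneSum hd ⟨hrefl, hsimp, hterm, hd0⟩ hcard
  exact ha.exists_iso hd
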